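/- Let κ = κ^{<κ} be an uncountable cardinal with 2^κ = κ⁺. Then κ has the κ⁺-filter property (the challenger has no winning strategy in the filter game of length κ⁺) if and only if κ is measurable. Moreover, both are equivalent to the judge having a winning strategy in this game. -/

import Mathlib

universe u

open FirstOrder FirstOrder.Language ZFSet

/-- The relations of the language of set theory: a single binary relation `mem`. -/
inductive memRelType : ℕ → Type
  | mem : memRelType 2

/-- The first-order language of set theory, with a single binary relation `∈`. -/
def memLang : FirstOrder.Language :=
  ⟨fun _ => Empty, memRelType⟩

/-- Any collection of ZFC sets is an `∈`-structure, via true membership. -/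
instance zStruct (S : Set ZFSet.{u}) : memLang.Structure ↥S where
  funMap := fun f _ => f.elim
  RelMap := fun {n} r x =>
    match n, r, x with
    | _, memRelType.mem, x => (x 0 : ZFSet) ∈ (x 1 : ZFSet)

/-- The `i`-th (bound) variable as a term. -/
abbrev mvar {n : ℕ} (i : Fin n) : memLang.Term (Empty ⊕ Fin n) :=
  FirstOrder.Language.Term.var (Sum.inr i)

/-- The atomic membership formula `t ∈ u`. -/
def memF {n : ℕ} (t u : memLang.Term (Empty ⊕ Fin n)) : memLang.BoundedFormula Empty n :=
  Relations.boundedFormula₂ memRelType.mem t u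

/-- The axiom of extensionality. -/
def extAx : memLang.Sentence :=
  ∀' ∀' ((∀' ((memF (mvar 2) (mvar 0)) ⇔ (memF (mvar 2) (mvar 1)))) ⟹
    ((mvar 0) =' (mvar 1)))

/-- The empty set axiom. -/
def emptyAx : memLang.Sentence :=
  ∃' ∀' (∼ (memF (mvar 1) (mvar 0)))

/-- The pairing axiom. -/
def pairAx : memLang.Sentence :=
  ∀' ∀' ∃' ((memF (mvar 0) (mvar 2)) ⊓ (memF (mvar 1) (mvar 2)))

/-- The union axiom. -/
def unionAx : memLang.Sentence :=
  ∀' ∃' ∀' ∀' (((memF (mvar 2) (mvar 3)) ⊓ (memF (mvar 3) (mvar 0))) ⟹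
    (memF (mvar 2) (mvar 1)))

/-- The axiom of infinity. -/
def infAx : memLang.Sentence :=
  ∃' ((∃' ((memF (mvar 1) (mvar 0)) ⊓ ∀' (∼ (memF (mvar 2) (mvar 1))))) ⊓
    (∀' ((memF (mvar 1) (mvar 0)) ⟹
      ∃' ((memF (mvar 2) (mvar 0)) ⊓
        ∀' ((memF (mvar 3) (mvar 2)) ⇔
          ((memF (mvar 3) (mvar 1)) ⊔ ((mvar 3) =' (mvar 1))))))))

/-- The foundation axiom. -/
def foundAx : memLang.Sentence :=
  ∀' ((∃' (memF (mvar 1) (mvar 0))) ⟹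
    ∃' ((memF (mvar 1) (mvar 0)) ⊓
      ∀' (∼ ((memF (mvar 2) (mvar 0)) ⊓ (memF (mvar 2) (mvar 1))))))

/-- The axiom of choice, in the form: every family of nonempty pairwise disjoint sets
admits a selector. -/
def choiceAx : memLang.Sentence :=
  ∀' (((∀' ((memF (mvar 1) (mvar 0)) ⟹ ∃' (memF (mvar 2) (mvar 1)))) ⊓
      (∀' ∀' (((memF (mvar 1) (mvar 0)) ⊓ (memF (mvar 2) (mvar 0)) ⊓
          (∼ ((mvar 1) =' (mvar 2)))) ⟹
        ∼ (∃' ((memF (mvar 3) (mvar 1)) ⊓ (memF (mvar 3) (mvar 2))))))) ⟹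
    ∃' ∀' ((memF (mvar 2) (mvar 0)) ⟹
      ∃' ((memF (mvar 3) (mvar 2)) ⊓ (memF (mvar 3) (mvar 1)) ⊓
        ∀' (((memF (mvar 4) (mvar 2)) ⊓ (memF (mvar 4) (mvar 1))) ⟹
          ((mvar 4) =' (mvar 3))))))

/-- The separation axiom for the formula `φ(p₀,…,p_{n-1}, x)`. -/
def sepAx (n : ℕ) (φ : memLang.BoundedFormula Empty (n + 1)) : memLang.Sentence :=
  (∀' (∃' (∀' ((memF (mvar ⟨n + 2, by omega⟩) (mvar ⟨n + 1, by omega⟩)) ⇔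
    ((memF (mvar ⟨n + 2, by omega⟩) (mvar ⟨n, by omega⟩)) ⊓
      (φ.liftAt 2 n)))))).alls

/-- The collection axiom for the formula `φ(p₀,…,p_{n-1}, x, y)`. -/
def collAx (n : ℕ) (φ : memLang.BoundedFormula Empty (n + 2)) : memLang.Sentence :=
  (∀' ((∀' ((memF (mvar ⟨n + 1, by omega⟩) (mvar ⟨n, by omega⟩)) ⟹
        ∃' (φ.liftAt 1 n))) ⟹
      (∃' (∀' ((memF (mvar ⟨n + 2, by omega⟩) (mvar ⟨n, by omega⟩)) ⟹
        ∃' ((memF (mvar ⟨n + 3, by omega⟩) (mvar ⟨n + 1, by omega⟩)) ⊓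
          (φ.liftAt 2 n))))))).alls

/-- The power set axiom. -/
def powAx : memLang.Sentence :=
  ∀' ∃' ∀' ((∀' ((memF (mvar 3) (mvar 2)) ⟹ (memF (mvar 3) (mvar 0)))) ⟹
    (memF (mvar 2) (mvar 1)))

/-- The theory `ZFC⁻`: ZFC without the power set axiom, with collection. -/
def ZFCminus : memLang.Theory :=
  {extAx, emptyAx, pairAx, unionAx, infAx, foundAx, choiceAx} ∪
    (⋃ n : ℕ, Set.range (sepAx n)) ∪ (⋃ n : ℕ, Set.range (collAx n))

/-- The theory `ZFC`. -/
def ZFCfull : memLang.Theory := insert powAx ZFCminus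

/-- `S` is an elementary substructure of `T` with respect to the membership relation. -/
def ElemSub (S T : Set ZFSet.{u}) : Prop :=
  ∃ h : S ⊆ T, ∀ (n : ℕ) (φ : memLang.BoundedFormula Empty n) (x : Fin n → ↥S),
    φ.Realize Empty.elim x ↔
      φ.Realize Empty.elim (fun i => (⟨(x i : ZFSet), h (x i).2⟩ : ↥T))

/-- `j : S → T` is an elementary embedding of `∈`-structures. -/
def ElemEmbOf (S T : Set ZFSet.{u}) (j : ↥S → ↥T) : Prop :=
  ∀ (n : ℕ) (φ : memLang.BoundedFormula Empty n) (x : Fin n → ↥S),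
    φ.Realize Empty.elim x ↔ φ.Realize Empty.elim (j ∘ x)
/-- The cardinality of a ZFC set. -/
noncomputable def zcard (x : ZFSet.{u}) : Cardinal.{u + 1} := Cardinal.mk x.toSet

/-- `θ` is (the von Neumann representation of) a regular cardinal. -/
def IsRegCard (θ : ZFSet.{u}) : Prop :=
  θ.IsOrdinal ∧ (zcard θ).IsRegular ∧ ∀ x ∈ θ, zcard x < zcard θ

/-- `κ` is (the von Neumann representation of) a cardinal. -/
def IsCardZ (κ : ZFSet.{u}) : Prop :=
  κ.IsOrdinal ∧ ∀ x ∈ κ, zcard x < zcard κ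

/-- The collection `H(θ)` of sets hereditarily of cardinality less than `θ`. -/
def HZ (θ : ZFSet.{u}) : Set ZFSet.{u} :=
  {x | ZFSet.Hereditarily (fun y => zcard y < zcard θ) x}

/-- The collection `H(κ⁺)` of sets hereditarily of cardinality at most `κ`. -/
def Hplus (κ : ZFSet.{u}) : Set ZFSet.{u} :=
  {x | ZFSet.Hereditarily (fun y => zcard y ≤ zcard κ) x}

/-- `f` codes a bijection from `a` onto `b`. -/
def IsBijZ (a b f : ZFSet.{u}) : Prop :=
  ZFSet.IsFunc a b f ∧ (∀ x₁ x₂ y, ZFSet.pair x₁ y ∈ f → ZFSet.pair x₂ y ∈ f → x₁ = x₂) ∧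
    ∀ y ∈ b, ∃ x, ZFSet.pair x y ∈ f

/-- `f` codes an injection from `a` into `b`. -/
def IsInjZ (a b f : ZFSet.{u}) : Prop :=
  ZFSet.IsFunc a b f ∧ ∀ x₁ x₂ y, ZFSet.pair x₁ y ∈ f → ZFSet.pair x₂ y ∈ f → x₁ = x₂

-- Part C : models
/-- A weak `κ`-model: a set `M` of size `κ` with `κ + 1 ⊆ M` satisfying `ZFC⁻`. -/
def WeakModelZ (κ : ZFSet.{u}) (M : Set ZFSet.{u}) : Prop :=
  Cardinal.mk ↥M = zcard κ ∧ insert κ κ.toSet ⊆ M ∧ (↥M ⊨ ZFCminus)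

/-- `M` is closed under `<α`-sequences (of sets, with domains ordinals `< α`). -/
def LtClosed (α : ZFSet.{u}) (M : Set ZFSet.{u}) : Prop :=
  ∀ δ y f : ZFSet, δ ∈ α → y.toSet ⊆ M → ZFSet.IsFunc δ y f → f ∈ M

/-- A `κ`-model: a weak `κ`-model closed under `<κ`-sequences. -/
def KappaModelZ (κ : ZFSet.{u}) (M : Set ZFSet.{u}) : Prop :=
  WeakModelZ κ M ∧ LtClosed κ M

/-- `j : S → T` has critical point `κ`. -/
def CritAt (S T : Set ZFSet.{u}) (j : ↥S → ↥T) (κ : ZFSet.{u}) : Prop :=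
  ∃ hκ : κ ∈ S, (∀ x : ↥S, (x : ZFSet) ∈ κ → ((j x : ZFSet) = (x : ZFSet))) ∧
    (j ⟨κ, hκ⟩ : ZFSet) ≠ κ

/-- `j : S → T` is `κ`-powerset preserving: it has critical point `κ` and `S` and `T`
have the same subsets of `κ`. -/
def PPres (κ : ZFSet.{u}) (S T : Set ZFSet.{u}) (j : ↥S → ↥T) : Prop :=
  CritAt S T j κ ∧ ∀ A : ZFSet, A ⊆ κ → (A ∈ S ↔ A ∈ T)

-- Part D : filters
/-- A filter on `κ` (in the sense of Holy–Schlicht): a collection of subsets of `κ` all of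
whose finite intersections have cardinality `κ`. -/
def IsZFilter (κ : ZFSet.{u}) (F : Set ZFSet.{u}) : Prop :=
  (∀ A ∈ F, A ⊆ κ) ∧ ∀ (n : ℕ) (A : Fin n → ZFSet),
    (∀ i, A i ∈ F) → Cardinal.mk ↥(κ.toSet ∩ ⋂ i, (A i).toSet) = zcard κ

/-- The diagonal intersection of a `κ`-sequence of subsets of `κ` coded by the
set-function `m`. -/
noncomputable def diagZ (κ m : ZFSet.{u}) : ZFSet.{u} :=
  ZFSet.sep (fun b => ∀ a v, a ∈ b → ZFSet.pair a v ∈ m → b ∈ v) κ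

/-- `m` codes a `κ`-sequence of elements of `F`. -/
def CodesFilterSeq (κ : ZFSet.{u}) (F : Set ZFSet.{u}) (m : ZFSet.{u}) : Prop :=
  (∃ y, ZFSet.IsFunc κ y m) ∧ ∀ b v, b ∈ κ → ZFSet.pair b v ∈ m → v ∈ F

/-- `F` is an `M`-normal filter on `κ`: it measures `P(κ) ∩ M` and is closed under
diagonal intersections of `κ`-sequences of its elements lying in `M`. -/
def MNormalZ (κ : ZFSet.{u}) (F : Set ZFSet.{u}) (M : Set ZFSet.{u}) : Prop :=
  IsZFilter κ F ∧ (∀ A : ZFSet, A ∈ M → A ⊆ κ → (A ∈ F ∨ (κ \ A) ∈ F)) ∧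
    ∀ m ∈ M, CodesFilterSeq κ F m → diagZ κ m ∈ F

/-- `U` is weakly amenable for `M`: traces of `U` on `κ`-sized elements of `M` are in `M`. -/
def WeaklyAmenableZ (κ : ZFSet.{u}) (M : Set ZFSet.{u}) (U : Set ZFSet.{u}) : Prop :=
  ∀ A : ZFSet, A ∈ M → zcard A ≤ zcard κ →
    ∃ B ∈ M, ∀ z : ZFSet, z ∈ B ↔ (z ∈ A ∧ z ∈ U)

/-- The domain of the ultrapower of `M` by a filter on `κ`: functions with domain `κ`
lying in `M`. -/
def UltFn (κ : ZFSet.{u}) (M : Set ZFSet.{u}) : Set ZFSet.{u} :=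
  {f | f ∈ M ∧ ∃ y, ZFSet.IsFunc κ y f}

/-- The membership relation of the ultrapower of `M` by `U`. -/
noncomputable def UltMem (κ : ZFSet.{u}) (U : Set ZFSet.{u}) (f g : ZFSet.{u}) : Prop :=
  ZFSet.sep (fun a => ∃ v w, ZFSet.pair a v ∈ f ∧ ZFSet.pair a w ∈ g ∧ v ∈ w) κ ∈ U

/-- The ultrapower of `M` by `U` is well-founded. -/
noncomputable def WellFoundedUlt (κ : ZFSet.{u}) (M : Set ZFSet.{u}) (U : Set ZFSet.{u}) : Prop :=
  WellFounded (fun f g : ↥(UltFn κ M) => UltMem κ U (f : ZFSet) (g : ZFSet))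
-- Part E : the filter games G_γ^θ(κ)
/-- `m` codes the sequence `⟨g b | b ∈ d⟩` of `κ`-sized collections of sets. -/
def CodesSetSeq (m d : ZFSet.{u}) (g : ZFSet.{u} → Set ZFSet.{u}) : Prop :=
  (∃ y, ZFSet.IsFunc d y m) ∧ ∀ b v, b ∈ d → ZFSet.pair b v ∈ m → v.toSet = g b

open Classical in
/-- The restriction of a play to the moves of index `< i`. -/
noncomputable def restrLt (g : ZFSet.{u} → Set ZFSet.{u}) (i : ZFSet.{u}) :
    ZFSet.{u} → Set ZFSet.{u} :=
  fun b => if b ∈ i then g b else ∅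

open Classical in
/-- The restriction of a play to the moves of index `≤ i`. -/
noncomputable def restrLe (g : ZFSet.{u} → Set ZFSet.{u}) (i : ZFSet.{u}) :
    ZFSet.{u} → Set ZFSet.{u} :=
  fun b => if (b ∈ i ∨ b = i) then g b else ∅

/-- The challenger's move at stage `i` of `G_γ^θ(κ)` is legal: he plays a `κ`-model
`M_i ≺ H(θ)` containing (codes for) the sequences of previous models and filter traces,
increasing the chain of models. -/
def ChalLegalAt (κ θ : ZFSet.{u}) (Ms Fs : ZFSet.{u} → Set ZFSet.{u}) (i : ZFSet.{u}) : Prop :=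
  (∀ j, j ∈ i → Ms j ⊆ Ms i) ∧ KappaModelZ κ (Ms i) ∧ ElemSub (Ms i) (HZ θ) ∧
    (∃ m ∈ Ms i, CodesSetSeq m i Ms) ∧
    (∃ f ∈ Ms i, CodesSetSeq f i (fun b => Fs b ∩ Ms b))

/-- The judge's move at stage `i` of `G_γ^θ(κ)` is legal: she plays a filter `F_i` on `κ`
measuring `P(κ) ∩ M_i` and extending her previous filters. -/
def JudgeLegalAt (κ : ZFSet.{u}) (Ms Fs : ZFSet.{u} → Set ZFSet.{u}) (i : ZFSet.{u}) : Prop :=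
  IsZFilter κ (Fs i) ∧ (∀ A : ZFSet, A ∈ Ms i → A ⊆ κ → (A ∈ Fs i ∨ (κ \ A) ∈ Fs i)) ∧
    ∀ j, j ∈ i → Fs j ⊆ Fs i

/-- The winning condition for the judge in `G_γ^θ(κ)`: the union of the filters played is
normal for the union of the models played. -/
def JudgeWinsRun (κ γ : ZFSet.{u}) (Ms Fs : ZFSet.{u} → Set ZFSet.{u}) : Prop :=
  MNormalZ κ (⋃ i ∈ γ.toSet, Fs i) (⋃ i ∈ γ.toSet, Ms i)

/-- `σ` is a winning strategy for the challenger in the game `G_γ^θ(κ)`. -/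
noncomputable def ChalWS (κ θ γ : ZFSet.{u})
    (σ : ZFSet.{u} → (ZFSet.{u} → Set ZFSet.{u}) → Set ZFSet.{u}) : Prop :=
  ∀ Fs : ZFSet.{u} → Set ZFSet.{u},
    (∀ i ∈ γ.toSet, (∀ j, j ∈ i → JudgeLegalAt κ (fun b => σ b (restrLt Fs b)) Fs j) →
      ChalLegalAt κ θ (fun b => σ b (restrLt Fs b)) Fs i) ∧
    ((∀ i ∈ γ.toSet, JudgeLegalAt κ (fun b => σ b (restrLt Fs b)) Fs i) →
      ¬ JudgeWinsRun κ γ (fun b => σ b (restrLt Fs b)) Fs)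

/-- `τ` is a winning strategy for the judge in the game `G_γ^θ(κ)`. -/
noncomputable def JudgeWS (κ θ γ : ZFSet.{u})
    (τ : ZFSet.{u} → (ZFSet.{u} → Set ZFSet.{u}) → Set ZFSet.{u}) : Prop :=
  ∀ Ms : ZFSet.{u} → Set ZFSet.{u},
    (∀ i ∈ γ.toSet,
      (∀ j, (j ∈ i ∨ j = i) → ChalLegalAt κ θ Ms (fun b => τ b (restrLe Ms b)) j) →
      JudgeLegalAt κ Ms (fun b => τ b (restrLe Ms b)) i) ∧
    ((∀ i ∈ γ.toSet, ChalLegalAt κ θ Ms (fun b => τ b (restrLe Ms b)) i) →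
      JudgeWinsRun κ γ Ms (fun b => τ b (restrLe Ms b)))

/-- `κ` has the `γ`-filter property: for every regular `θ > κ`, the challenger has no
winning strategy in `G_γ^θ(κ)`. -/
noncomputable def FilterPropZ (κ γ : ZFSet.{u}) : Prop :=
  ∀ θ : ZFSet.{u}, IsRegCard θ → κ ∈ θ → ¬ ∃ σ, ChalWS κ θ γ σ

/-- `κ` has the strategic `γ`-filter property: for every regular `θ > κ`, the judge has a
winning strategy in `G_γ^θ(κ)`. -/
noncomputable def StratFilterPropZ (κ γ : ZFSet.{u}) : Prop :=
  ∀ θ : ZFSet.{u}, IsRegCard θ → κ ∈ θ → ∃ τ, JudgeWS κ θ γ τ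

/-- `κ` is `α`-Ramsey (Holy–Schlicht, Definition 5.1): for arbitrarily large regular
cardinals `θ`, every `A ⊆ κ` is contained, as an element, in some weak `κ`-model
`M ≺ H(θ)` closed under `<α`-sequences, for which there exists a `κ`-powerset preserving
elementary embedding `j : M → N`. -/
def AlphaRamseyZ (α κ : ZFSet.{u}) : Prop :=
  ∀ η : ZFSet.{u}, ∃ θ : ZFSet.{u}, η ∈ θ ∧ IsRegCard θ ∧ ∀ A : ZFSet, A ⊆ κ →
    ∃ M : Set ZFSet.{u}, A ∈ M ∧ WeakModelZ κ M ∧ LtClosed α M ∧ ElemSub M (HZ θ) ∧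
      ∃ (N : Set ZFSet.{u}) (j : ↥M → ↥N), ElemEmbOf M N j ∧ PPres κ M N j

/-- `κ` is a measurable cardinal: there is a `<κ`-complete nonprincipal ultrafilter on `κ`. -/
def MeasurableZ (κ : ZFSet.{u}) : Prop :=
  ∃ U : Set ZFSet.{u},
    (∀ A ∈ U, A ⊆ κ) ∧ (∅ : ZFSet.{u}) ∉ U ∧
    (∀ A : ZFSet.{u}, A ⊆ κ → (A ∈ U ∨ (κ \ A) ∈ U)) ∧
    (∀ s : ZFSet.{u}, s.toSet ⊆ U → zcard s < zcard κ →
      ∃ B ∈ U, ∀ z : ZFSet, z ∈ B ↔ (z ∈ κ ∧ ∀ A, A ∈ s → z ∈ A)) ∧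
    (∀ a, a ∈ κ → ∃ A ∈ U, a ∉ A)

section
open Cardinal Set

theorem exists_normal_uf {K : Type u} [LinearOrder K] [WellFoundedLT K]
    (hK : ∀ a : K, #(Set.Iio a) < #K) (hunc : ℵ₀ < #K) (V : Ultrafilter K)
    (hcomp : ∀ (S : Set (Set K)), #S < #K → (∀ A ∈ S, A ∈ V) → ⋂₀ S ∈ V)
    (hnp : ∀ a : K, {a}ᶜ ∈ V) :
    ∃ W : Ultrafilter K, (∀ A ∈ W, #A = #K) ∧
      ∀ f : K → Set K, (∀ a, f a ∈ W) → {b | ∀ a < b, b ∈ f a} ∈ W := by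
  classical
  have hcomp' : ∀ (ι : Type u) (s : ι → Set K), #ι < #K → (∀ i, s i ∈ V) → (⋂ i, s i) ∈ V := by
    intro ι s hι hs
    have := hcomp (Set.range s) (lt_of_le_of_lt mk_range_le hι) (by rintro A ⟨i, rfl⟩; exact hs i)
    rwa [Set.sInter_range] at this
  have hIic : ∀ a : K, #(Set.Iic a) < #K := by
    intro a
    have : Set.Iic a = insert a (Set.Iio a) := by ext x; simp [le_iff_eq_or_lt]
    rw [this]
    refine lt_of_le_of_lt (mk_insert_le) ?_
    exact add_lt_of_lt hunc.le (hK a) (lt_of_lt_of_le one_lt_aleph0 hunc.le)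
  -- a function to K which is not V-constant on a small set avoids it
  have havoid : ∀ (g : K → K) (A : Set K), #A < #K → (∀ a, {x | g x ≠ a} ∈ V) →
      {x | g x ∉ A} ∈ V := by
    intro g A hA h
    have := hcomp' A (fun a => {x | g x ≠ a}) hA (fun a => h a)
    refine Filter.mem_of_superset this ?_
    intro x hx hxA
    simp only [Set.mem_iInter] at hx
    exact hx ⟨g x, hxA⟩ rfl
  let R : (K → K) → (K → K) → Prop := fun f g => {x | f x < g x} ∈ V
  have hR : WellFounded R := by
    rw [wellFounded_iff_isEmpty_descending_chain]
    refine ⟨fun ⟨f, hf⟩ => ?_⟩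
    have hmem := hcomp' (ULift.{u} ℕ) (fun n => {x | f (n.down + 1) x < f n.down x})
      (by simpa using hunc) (fun n => hf n.down)
    obtain ⟨x, hx⟩ := V.nonempty_of_mem hmem
    simp only [Set.mem_iInter] at hx
    have : WellFounded (fun a b : K => a < b) := wellFounded_lt
    rw [wellFounded_iff_isEmpty_descending_chain] at this
    exact this.false ⟨fun n => f n x, fun n => hx ⟨n⟩⟩
  let S : Set (K → K) := {f | ∀ a, {x | a < f x} ∈ V}
  have hid : id ∈ S := by
    intro a
    have := havoid id (Set.Iic a) (hIic a) (fun a => hnp a)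
    simpa using this
  obtain ⟨f, hfS, hfmin⟩ := hR.has_min S ⟨id, hid⟩
  refine ⟨V.map f, ?_, ?_⟩
  · intro A hA
    refine le_antisymm (mk_set_le A) (not_lt.1 fun hlt => ?_)
    have h1 := havoid f A hlt (fun a => Filter.mem_of_superset (hfS a) (fun x hx => ne_of_gt hx))
    have h2 : f ⁻¹' A ∈ V := hA
    obtain ⟨x, hx⟩ := V.nonempty_of_mem (Filter.inter_mem h1 h2)
    exact hx.1 hx.2
  · intro A hA
    by_contra hD
    have hD' : {x | ∃ a < f x, f x ∉ A a} ∈ V := by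
      have : (f ⁻¹' {b | ∀ a < b, b ∈ A a}) ∉ V := hD
      rw [← Ultrafilter.compl_mem_iff_notMem] at this
      refine Filter.mem_of_superset this ?_
      intro x hx
      simpa using hx
    let g : K → K := fun x => if h : ∃ a < f x, f x ∉ A a then h.choose else f x
    have hg : ∀ x, (∃ a < f x, f x ∉ A a) → g x < f x ∧ f x ∉ A (g x) := by
      intro x h
      simp only [g, dif_pos h]
      exact h.choose_spec
    have hgf : R g f := Filter.mem_of_superset hD' (fun x hx => (hg x hx).1)
    have hgS : g ∉ S := fun h => hfmin g h hgf
    simp only [S, Set.mem_ofPred_eq, not_forall] at hgS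
    obtain ⟨a, ha⟩ := hgS
    have : ∃ c, {x | g x = c} ∈ V := by
      by_contra hno
      push Not at hno
      have := havoid g (Set.Iic a) (hIic a) (fun c => by
        have := hno c
        rw [← Ultrafilter.compl_mem_iff_notMem] at this
        exact this)
      exact ha (by simpa using this)
    obtain ⟨c, hc⟩ := this
    have h3 : f ⁻¹' (A c) ∈ V := hA c
    obtain ⟨x, ⟨hx1, hx2⟩, hx3⟩ := V.nonempty_of_mem (Filter.inter_mem (Filter.inter_mem hD' hc) h3)
    have := (hg x hx1).2
    rw [hx2] at this
    exact this hx3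

end

section
open Cardinal Set

theorem mem_toSetZ {x y : ZFSet.{u}} : x ∈ y.toSet ↔ x ∈ y := Iff.rfl

theorem sub_defZ {x y : ZFSet.{u}} : x ⊆ y ↔ ∀ z, z ∈ x → z ∈ y := Iff.rfl

/-- The elements of `κ` as a type. -/
def KT (κ : ZFSet.{u}) : Type (u+1) := {x // x ∈ κ}

/-- The normal ultrafilter derived from measurability. -/
theorem exists_normalZ (κ : ZFSet.{u}) (hκ : IsCardZ κ) (hunc : ℵ₀ < zcard κ)
    (hm : MeasurableZ κ) :
    ∃ W : Set ZFSet.{u}, IsZFilter κ W ∧ (∀ A : ZFSet, A ⊆ κ → (A ∈ W ∨ (κ \ A) ∈ W)) ∧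
      ∀ m, CodesFilterSeq κ W m → diagZ κ m ∈ W := by
  classical
  obtain ⟨U, hUsub, hU0, hUult, hUcomp, hUnp⟩ := hm
  let K : Type (u+1) := KT κ
  let r : K → K → Prop := fun a b => a.1 ∈ b.1
  have hwo : IsWellOrder K r := hκ.1.isWellOrder
  let : LinearOrder K := linearOrderOfSTO r
  have hltK : ∀ a b : K, a < b ↔ a.1 ∈ b.1 := fun a b => Iff.rfl
  have : WellFoundedLT K := ⟨hwo.wf⟩
  have hcardK : #K = zcard κ := rfl
  have hK : ∀ a : K, #(Set.Iio a) < #K := by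
    intro a
    refine lt_of_le_of_lt ?_ (hκ.2 a.1 a.2)
    refine Cardinal.mk_le_of_injective (f := fun x : Set.Iio a => (⟨x.1.1, x.2⟩ : a.1.toSet)) ?_
    intro x y h
    have := congrArg Subtype.val h
    exact Subtype.ext (Subtype.ext (p := fun x => x ∈ κ) this)
  let enc : Set K → ZFSet.{u} := fun A => ZFSet.sep (fun x => ∃ h : x ∈ κ, (⟨x,h⟩ : K) ∈ A) κ
  have hencmem : ∀ A (x : K), x.1 ∈ enc A ↔ x ∈ A := by
    intro A x
    simp only [enc, ZFSet.mem_sep]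
    exact ⟨fun ⟨_, _, h⟩ => h, fun h => ⟨x.2, x.2, h⟩⟩
  have hencsub : ∀ A, enc A ⊆ κ := fun A => ZFSet.sep_subset
  have hext : ∀ {A B : ZFSet.{u}}, A ⊆ κ → B ⊆ κ → (∀ x : K, x.1 ∈ A ↔ x.1 ∈ B) → A = B := by
    intro A B hA hB h
    ext z
    exact ⟨fun hz => (h ⟨z, hA hz⟩).1 hz, fun hz => (h ⟨z, hB hz⟩).2 hz⟩
  have hinter : ∀ S : Set (Set K), #S < #K → (∀ A ∈ S, enc A ∈ U) → enc (⋂₀ S) ∈ U := by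
    intro S hS hSU
    have hsm : Small.{u} S := by
      have : Small.{u} K := ZFSet.small_coe κ
      infer_instance
    obtain ⟨B, hB, hBm⟩ := hUcomp (ZFSet.range (fun A : S => enc A.1)) (by
        intro z hz
        rw [mem_toSetZ, ZFSet.mem_range] at hz
        obtain ⟨i, rfl⟩ := hz
        exact hSU _ i.2) (by
        refine lt_of_le_of_lt ?_ hS
        have : (ZFSet.range (fun A : S => enc A.1)).toSet = Set.range (fun A : S => enc A.1) := by
          ext z; rw [mem_toSetZ, ZFSet.mem_range]; rfl
        rw [zcard, this]
        exact mk_range_le)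
    have : enc (⋂₀ S) = B := by
      refine hext (hencsub _) (hUsub B hB) ?_
      intro x
      rw [hencmem, hBm]
      constructor
      · intro h
        refine ⟨x.2, ?_⟩
        intro A hA
        rw [ZFSet.mem_range] at hA
        obtain ⟨i, rfl⟩ := hA
        exact (hencmem _ _).2 (h _ i.2)
      · rintro ⟨_, h⟩ A hA
        exact (hencmem _ _).1 (h _ (ZFSet.mem_range.2 ⟨⟨A, hA⟩, rfl⟩))
    rw [this]; exact hB
  have hfinK : ∀ S : Set (Set K), S.Finite → #S < #K := fun S hS =>
    lt_trans hS.lt_aleph0 hunc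
  have hcompl : ∀ A : Set K, κ \ enc A = enc Aᶜ := by
    intro A
    refine hext (fun z hz => (ZFSet.mem_sdiff.1 hz).1) (hencsub _) ?_
    intro x
    rw [ZFSet.mem_sdiff, hencmem, hencmem]
    simp [x.2]
  have hem : enc ∅ = ∅ := hext (hencsub _) (ZFSet.empty_subset _) (fun x => by
    rw [hencmem]; simp)
  have hint2 : ∀ A B, enc A ∈ U → enc B ∈ U → enc (A ∩ B) ∈ U := by
    intro A B hA hB
    have := hinter {A, B} (hfinK _ (by simp)) (by
      rintro C (rfl | rfl) <;> assumption)
    rwa [Set.sInter_pair] at this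
  have hsup : ∀ A B, enc A ∈ U → A ⊆ B → enc B ∈ U := by
    intro A B hA hAB
    rcases hUult (enc B) (hencsub B) with h | h
    · exact h
    · exfalso
      rw [hcompl] at h
      have := hint2 _ _ hA h
      have h2 : A ∩ Bᶜ = ∅ := by
        ext x; simp only [Set.mem_inter_iff, Set.mem_compl_iff, Set.mem_empty_iff_false, iff_false]
        exact fun h => h.2 (hAB h.1)
      rw [h2, hem] at this
      exact hU0 this
  let F : Filter K :=
    { sets := {A | enc A ∈ U}
      univ_sets := by
        have := hinter ∅ (hfinK _ (by simp)) (by simp)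
        rwa [Set.sInter_empty] at this
      sets_of_superset := fun {A B} hA hAB => hsup A B hA hAB
      inter_sets := fun {A B} hA hB => hint2 A B hA hB }
  have hFmem : ∀ A, A ∈ F ↔ enc A ∈ U := fun A => Iff.rfl
  let V : Ultrafilter K := Ultrafilter.ofComplNotMemIff F (by
    intro A
    rw [hFmem, hFmem]
    constructor
    · intro h
      rcases hUult (enc A) (hencsub A) with h' | h'
      · exact h'
      · rw [hcompl] at h'; exact absurd h' h
    · intro h h'
      have := hint2 _ _ h h'
      rw [Set.inter_compl_self, hem] at this
      exact hU0 this)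
  have hVmem : ∀ A, A ∈ V ↔ enc A ∈ U := fun A => Iff.rfl
  obtain ⟨W, hW1, hW2⟩ := exists_normal_uf hK hunc V
    (fun S hS h => hinter S hS h) (by
      intro a
      rw [hVmem]
      obtain ⟨A, hA, haA⟩ := hUnp a.1 a.2
      have hA' : enc {x | x.1 ∈ A} = A := hext (hencsub _) (hUsub A hA) (fun x => by
        rw [hencmem]; rfl)
      refine hsup {x | x.1 ∈ A} _ (by rw [hA']; exact hA) ?_
      intro x hx hxa
      rw [Set.mem_singleton_iff] at hxa
      rw [hxa] at hx
      exact haA hx)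
  let dec : ZFSet.{u} → Set K := fun B => {x | x.1 ∈ B}
  refine ⟨{B | B ⊆ κ ∧ dec B ∈ W}, ⟨fun A hA => hA.1, ?_⟩, ?_, ?_⟩
  · intro n A hA
    have h1 : (⋂ i, dec (A i)) ∈ W := by
      have := (Filter.iInter_mem (f := (W : Filter K)) (s := fun i => dec (A i))).2 (fun i => (hA i).2)
      exact this
    have h2 := hW1 _ h1
    rw [hcardK] at h2
    rw [← h2]
    have h3 : κ.toSet ∩ ⋂ i, (A i).toSet = Subtype.val '' (⋂ i, dec (A i)) := by
      ext z
      constructor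
      · rintro ⟨hz, hz2⟩
        rw [Set.mem_iInter] at hz2
        exact ⟨⟨z, hz⟩, Set.mem_iInter.2 (fun i => hz2 i), rfl⟩
      · rintro ⟨x, hx, rfl⟩
        have hx := (Set.mem_iInter (α := K)).1 hx
        exact ⟨x.2, Set.mem_iInter.2 (fun i => hx i)⟩
    rw [h3]
    exact mk_image_eq Subtype.val_injective
  · intro A hA
    by_cases h : dec A ∈ W
    · exact Or.inl ⟨hA, h⟩
    · right
      refine ⟨fun z hz => (ZFSet.mem_sdiff.1 hz).1, ?_⟩
      rw [← Ultrafilter.compl_mem_iff_notMem] at h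
      refine Filter.mem_of_superset h ?_
      intro x hx
      exact ZFSet.mem_sdiff.2 ⟨x.2, hx⟩
  · rintro m ⟨⟨y, hf1, hf2⟩, hmF⟩
    refine ⟨ZFSet.sep_subset, ?_⟩
    have hch : ∀ a : K, ∃ v, ZFSet.pair a.1 v ∈ m := fun a => (hf2 a.1 a.2).exists
    choose v hv using hch
    refine Filter.mem_of_superset (hW2 (fun a => dec (v a)) (fun a => (hmF a.1 (v a) a.2 (hv a)).2)) ?_
    intro b hb
    show b.1 ∈ diagZ κ m
    rw [diagZ, ZFSet.mem_sep]
    refine ⟨b.2, ?_⟩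
    intro a w hab haw
    have haK : a ∈ κ := hκ.1.mem_trans hab b.2
    have hw : w = v ⟨a, haK⟩ := (hf2 a haK).unique haw (hv ⟨a, haK⟩)
    rw [hw]
    exact hb ⟨a, haK⟩ hab

theorem measurable_strat (κ γ : ZFSet.{u}) (hκ : IsCardZ κ) (hunc : ℵ₀ < zcard κ)
    (hγ : γ.toSet.Nonempty)
    (hm : MeasurableZ κ) : StratFilterPropZ κ γ := by
  obtain ⟨W, h1, h2, h3⟩ := exists_normalZ κ hκ hunc hm
  intro θ _ _
  refine ⟨fun _ _ => W, fun Ms => ⟨?_, ?_⟩⟩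
  · intro i _ _
    exact ⟨h1, fun A _ hA => h2 A hA, fun j _ => le_refl _⟩
  · intro _
    unfold JudgeWinsRun
    have : (⋃ i ∈ γ.toSet, W) = W := Set.biUnion_const hγ W
    rw [this]
    exact ⟨h1, fun A _ hA => h2 A hA, fun m _ hm => h3 m hm⟩

/-- The judge's moves when `σ` is played against `τ`. -/
noncomputable def vsFs (σ τ : ZFSet.{u} → (ZFSet.{u} → Set ZFSet.{u}) → Set ZFSet.{u})
    (i : ZFSet.{u}) : Set ZFSet.{u} :=
  open Classical in
  τ i (fun b => if hb : b ∈ i ∨ b = i then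
    σ b (fun c => if hc : c ∈ b then vsFs σ τ c else ∅) else ∅)
termination_by i.rank
decreasing_by
  rcases hb with hb | hb
  · exact (ZFSet.rank_lt_of_mem hc).trans (ZFSet.rank_lt_of_mem hb)
  · subst hb; exact ZFSet.rank_lt_of_mem hc

theorem strat_filter (κ γ : ZFSet.{u}) (hγ : γ.IsOrdinal)
    (h : StratFilterPropZ κ γ) : FilterPropZ κ γ := by
  rintro θ hθ hκθ ⟨σ, hσ⟩
  obtain ⟨τ, hτ⟩ := h θ hθ hκθ
  let Fs := vsFs σ τ
  let Ms : ZFSet.{u} → Set ZFSet.{u} := fun b => σ b (restrLt Fs b)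
  have hFs : (fun b => τ b (restrLe Ms b)) = Fs := by
    funext i
    simp only [Fs]
    rw [vsFs]
    congr 1
  obtain ⟨hσ1, hσ2⟩ := hσ Fs
  obtain ⟨hτ1, hτ2⟩ := hτ Ms
  rw [hFs] at hτ1 hτ2
  have key : ∀ i, i ∈ γ → ChalLegalAt κ θ Ms Fs i ∧ JudgeLegalAt κ Ms Fs i := by
    intro i
    induction i using ZFSet.inductionOn with
    | h i ih =>
      intro hi
      have hc : ChalLegalAt κ θ Ms Fs i := hσ1 i hi (fun j hj => (ih j hj (hγ.mem_trans hj hi)).2)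
      refine ⟨hc, hτ1 i hi ?_⟩
      rintro j (hj | rfl)
      · exact (ih j hj (hγ.mem_trans hj hi)).1
      · exact hc
  exact hσ2 (fun i hi => (key i hi).2) (hτ2 (fun i hi => (key i hi).1))

end

section
open Cardinal Set FirstOrder FirstOrder.Language

theorem realize_memF {S : Set ZFSet.{u}} {n : ℕ} (t s : memLang.Term (Empty ⊕ Fin n))
    (v : Empty → S) (xs : Fin n → S) :
    (memF t s).Realize v xs ↔
      ((t.realize (Sum.elim v xs) : S) : ZFSet) ∈ ((s.realize (Sum.elim v xs) : S) : ZFSet) := by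
  unfold memF
  exact BoundedFormula.realize_rel₂ (L := memLang)

theorem lift_sep {α : Type*} (n : ℕ) (xs : Fin n → α) (a b x : α) :
    ((Fin.snoc (Fin.snoc (Fin.snoc xs a : Fin (n+1) → α) b : Fin (n+2) → α) x : Fin (n+1+2) → α) ∘
      fun i : Fin (n+1) => if (i : ℕ) < n then Fin.castAdd 2 i else Fin.addNat i 2) =
      (Fin.snoc xs x : Fin (n+1) → α) := by
  funext i
  by_cases h : (i : ℕ) < n
  · have h1 : (i:ℕ) < n + 1 := by omega
    have h2 : (i:ℕ) < n + 1 + 1 := by omega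
    simp [Fin.snoc, h, h1, h2]
    rfl
  · have h1 : (i:ℕ) = n := by omega
    simp [Fin.snoc, h1]

theorem lift_coll1 {α : Type*} (n : ℕ) (xs : Fin n → α) (a x y : α) :
    ((Fin.snoc (Fin.snoc (Fin.snoc xs a : Fin (n+1) → α) x : Fin (n+2) → α) y : Fin (n+2+1) → α) ∘
      fun i : Fin (n+2) => if (i : ℕ) < n then Fin.castAdd 1 i else Fin.addNat i 1) =
      (Fin.snoc (Fin.snoc xs x : Fin (n+1) → α) y : Fin (n+2) → α) := by
  funext i
  by_cases h : (i : ℕ) < n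
  · have h1 : (i:ℕ) < n + 1 := by omega
    have h2 : (i:ℕ) < n + 1 + 1 := by omega
    simp [Fin.snoc, h, h1]
  · have h1 : (i:ℕ) = n ∨ (i : ℕ) = n+1 := by omega
    rcases h1 with h1 | h1 <;> simp [Fin.snoc, h1]

theorem lift_coll2 {α : Type*} (n : ℕ) (xs : Fin n → α) (a b x y : α) :
    ((Fin.snoc (Fin.snoc (Fin.snoc (Fin.snoc xs a : Fin (n+1) → α) b : Fin (n+2) → α) x :
      Fin (n+3) → α) y : Fin (n+2+2) → α) ∘
      fun i : Fin (n+2) => if (i : ℕ) < n then Fin.castAdd 2 i else Fin.addNat i 2) =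
      (Fin.snoc (Fin.snoc xs x : Fin (n+1) → α) y : Fin (n+2) → α) := by
  funext i
  by_cases h : (i : ℕ) < n
  · have h1 : (i:ℕ) < n + 1 := by omega
    have h2 : (i:ℕ) < n + 1 + 1 := by omega
    have h3 : (i:ℕ) < n + 1 + 1 + 1 := by omega
    have h3' : (i:ℕ) < n + 3 := by omega
    have h2' : (i:ℕ) < n + 2 := by omega
    simp [Fin.snoc, h, h1, h2, h3]
    rfl
  · have h1 : (i:ℕ) = n ∨ (i : ℕ) = n+1 := by omega
    rcases h1 with h1 | h1 <;> simp [Fin.snoc, h1]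

theorem sepAx_realize {S : Set ZFSet.{u}} (n : ℕ) (φ : memLang.BoundedFormula Empty (n + 1)) :
    (S ⊨ sepAx n φ) ↔ ∀ (xs : Fin n → S) (a : S), ∃ b : S, ∀ x : S,
      (x : ZFSet) ∈ (b : ZFSet) ↔ ((x : ZFSet) ∈ (a : ZFSet) ∧
        φ.Realize (default : Empty → S) (Fin.snoc xs x : Fin (n+1) → S)) := by
  unfold sepAx
  rw [Sentence.Realize, BoundedFormula.realize_alls]
  refine forall_congr' fun xs => ?_
  rw [BoundedFormula.realize_all]
  refine forall_congr' fun a => ?_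
  rw [BoundedFormula.realize_ex]
  refine exists_congr fun b => ?_
  rw [BoundedFormula.realize_all]
  refine forall_congr' fun x => ?_
  rw [BoundedFormula.realize_iff, BoundedFormula.realize_inf, realize_memF, realize_memF]
  rw [BoundedFormula.realize_liftAt (by omega)]
  rw [lift_sep]
  simp [Fin.snoc]

theorem collAx_realize {S : Set ZFSet.{u}} (n : ℕ) (φ : memLang.BoundedFormula Empty (n + 2)) :
    (S ⊨ collAx n φ) ↔ ∀ (xs : Fin n → S) (a : S),
      (∀ x : S, (x : ZFSet) ∈ (a : ZFSet) → ∃ y : S, φ.Realize (default : Empty → S)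
        (Fin.snoc (Fin.snoc xs x : Fin (n+1) → S) y : Fin (n+2) → S)) →
      ∃ b : S, ∀ x : S, (x : ZFSet) ∈ (a : ZFSet) → ∃ y : S, (y : ZFSet) ∈ (b : ZFSet) ∧
        φ.Realize (default : Empty → S)
          (Fin.snoc (Fin.snoc xs x : Fin (n+1) → S) y : Fin (n+2) → S) := by
  unfold collAx
  rw [Sentence.Realize, BoundedFormula.realize_alls]
  refine forall_congr' fun xs => ?_
  rw [BoundedFormula.realize_all]
  refine forall_congr' fun a => ?_
  rw [BoundedFormula.realize_imp]
  refine imp_congr ?_ ?_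
  · rw [BoundedFormula.realize_all]
    refine forall_congr' fun x => ?_
    rw [BoundedFormula.realize_imp, BoundedFormula.realize_ex, realize_memF]
    refine imp_congr (by simp [Fin.snoc]) (exists_congr fun y => ?_)
    rw [BoundedFormula.realize_liftAt (by omega), lift_coll1]
  · rw [BoundedFormula.realize_ex]
    refine exists_congr fun b => ?_
    rw [BoundedFormula.realize_all]
    refine forall_congr' fun x => ?_
    rw [BoundedFormula.realize_imp, BoundedFormula.realize_ex, realize_memF]
    refine imp_congr (by simp [Fin.snoc]) (exists_congr fun y => ?_)
    rw [BoundedFormula.realize_inf, realize_memF, BoundedFormula.realize_liftAt (by omega),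
      lift_coll2]
    simp [Fin.snoc]

/-- Characterization of a set of the form `H(κ⁺)`. -/
def IsHer (c : Cardinal.{u+1}) (S : Set ZFSet.{u}) : Prop :=
  ∀ x, x ∈ S ↔ (zcard x ≤ c ∧ ∀ y, y ∈ x → y ∈ S)

theorem isHer_HZ (γ : ZFSet.{u}) (c : Cardinal.{u+1}) (h : zcard γ = Order.succ c) :
    IsHer c (HZ γ) := by
  intro x
  have : x ∈ HZ γ ↔ (zcard x < zcard γ ∧ ∀ y ∈ x, y ∈ HZ γ) := ZFSet.hereditarily_iff
  rw [this, h, Order.lt_succ_iff]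

theorem zcard_mono {x y : ZFSet.{u}} (h : x ⊆ y) : zcard x ≤ zcard y :=
  mk_le_mk_of_subset h

theorem toSet_range {α : Type*} [Small.{u} α] (f : α → ZFSet.{u}) :
    (ZFSet.range f).toSet = Set.range f := by
  ext z; rw [mem_toSetZ, ZFSet.mem_range]; rfl

theorem zcard_range_le {α : Type (u+1)} [Small.{u} α] (f : α → ZFSet.{u}) :
    zcard (ZFSet.range f) ≤ #α := by
  rw [zcard, toSet_range]; exact mk_range_le

theorem zcard_insert_le (x y : ZFSet.{u}) : zcard (insert x y) ≤ zcard y + 1 := by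
  have : (insert x y : ZFSet).toSet = insert x y.toSet := by
    ext z; rw [mem_toSetZ, ZFSet.mem_insert_iff]; rfl
  rw [zcard, this]; exact mk_insert_le

theorem zcard_empty : zcard (∅ : ZFSet.{u}) = 0 := by
  rw [zcard, mk_eq_zero_iff]
  exact ⟨fun x => ZFSet.notMem_empty _ x.2⟩

section
variable {S : Set ZFSet.{u}} {c : Cardinal.{u+1}}

theorem IsHer.mem (hS : IsHer c S) {x y : ZFSet.{u}} (hx : x ∈ S) (hy : y ∈ x) : y ∈ S :=
  ((hS x).1 hx).2 y hy

theorem IsHer.sub (hS : IsHer c S) {x y : ZFSet.{u}} (hx : x ∈ S) (hy : y ⊆ x) : y ∈ S :=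
  (hS y).2 ⟨(zcard_mono hy).trans ((hS x).1 hx).1, fun _ hz => hS.mem hx (hy hz)⟩

theorem IsHer.empty (hS : IsHer c S) : (∅ : ZFSet) ∈ S :=
  (hS _).2 ⟨by rw [zcard_empty]; exact bot_le, fun y hy => absurd hy (ZFSet.notMem_empty y)⟩

theorem IsHer.insert (hS : IsHer c S) (hc : ℵ₀ ≤ c) {x y : ZFSet.{u}} (hx : x ∈ S) (hy : y ∈ S) :
    insert x y ∈ S := by
  refine (hS _).2 ⟨(zcard_insert_le x y).trans ?_, ?_⟩
  · exact add_le_of_le hc ((hS y).1 hy).1 (one_le_aleph0.trans hc)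
  · intro z hz
    rcases ZFSet.mem_insert_iff.1 hz with rfl | h
    · exact hx
    · exact hS.mem hy h

theorem IsHer.doubleton (hS : IsHer c S) (hc : ℵ₀ ≤ c) {x y : ZFSet.{u}} (hx : x ∈ S) (hy : y ∈ S) :
    ({x, y} : ZFSet) ∈ S := by
  have h1 : ({y} : ZFSet) = Insert.insert y ∅ := by ext; simp
  refine hS.insert hc hx ?_
  rw [h1]
  exact hS.insert hc hy hS.empty

theorem IsHer.pair (hS : IsHer c S) (hc : ℵ₀ ≤ c) {x y : ZFSet.{u}} (hx : x ∈ S) (hy : y ∈ S) :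
    ZFSet.pair x y ∈ S := by
  have h1 : ({x} : ZFSet) = {x, x} := by ext; simp
  unfold ZFSet.pair
  refine hS.doubleton hc ?_ (hS.doubleton hc hx hy)
  rw [h1]; exact hS.doubleton hc hx hx

theorem IsHer.range (hS : IsHer c S) {α : Type (u+1)} [Small.{u} α] (f : α → ZFSet.{u})
    (hα : #α ≤ c) (hf : ∀ a, f a ∈ S) : ZFSet.range f ∈ S := by
  refine (hS _).2 ⟨(zcard_range_le f).trans hα, ?_⟩
  intro y hy
  obtain ⟨i, rfl⟩ := ZFSet.mem_range.1 hy
  exact hf i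

theorem IsHer.sUnion (hS : IsHer c S) (hc : ℵ₀ ≤ c) {x : ZFSet.{u}} (hx : x ∈ S) :
    ZFSet.sUnion x ∈ S := by
  refine (hS _).2 ⟨?_, ?_⟩
  · have : (ZFSet.sUnion x).toSet = ⋃ y : x.toSet, y.1.toSet := by
      ext z
      rw [mem_toSetZ, ZFSet.mem_sUnion, Set.mem_iUnion]
      exact ⟨fun ⟨y, hy, hz⟩ => ⟨⟨y, hy⟩, hz⟩, fun ⟨y, hz⟩ => ⟨y.1, y.2, hz⟩⟩
    rw [zcard, this]
    refine (mk_iUnion_le _).trans ?_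
    have h1 : #x.toSet ≤ c := ((hS x).1 hx).1
    have h2 : (⨆ y : x.toSet, #y.1.toSet) ≤ c := ciSup_le' fun y =>
      ((hS y.1).1 (hS.mem hx y.2)).1
    calc #x.toSet * (⨆ y : x.toSet, #y.1.toSet) ≤ c * c := mul_le_mul' h1 h2
      _ = c := mul_eq_self hc
  · intro z hz
    obtain ⟨y, hy, hzy⟩ := ZFSet.mem_sUnion.1 hz
    exact hS.mem (hS.mem hx hy) hzy

theorem IsHer.omega (hS : IsHer c S) (hc : ℵ₀ ≤ c) :
    ∃ w ∈ S, (∅ : ZFSet) ∈ w ∧ ∀ x ∈ w, (Insert.insert x x : ZFSet) ∈ w := by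
  let f : ℕ → ZFSet.{u} := fun n => Nat.rec ∅ (fun _ x => Insert.insert x x) n
  have hf : ∀ n, f n ∈ S := by
    intro n
    induction n with
    | zero => exact hS.empty
    | succ n ih => exact hS.insert hc ih ih
  refine ⟨ZFSet.range (fun n : ULift.{u+1} ℕ => f n.down), hS.range _ (by simpa using hc)
    (fun a => hf _), ?_, ?_⟩
  · exact ZFSet.mem_range.2 ⟨⟨0⟩, rfl⟩
  · intro x hx
    obtain ⟨n, rfl⟩ := ZFSet.mem_range.1 hx
    exact ZFSet.mem_range.2 ⟨⟨n.down + 1⟩, rfl⟩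

theorem IsHer.zfc (hS : IsHer c S) (hc : ℵ₀ ≤ c) : S ⊨ ZFCminus := by
  classical
  rw [Theory.model_iff]
  intro ψ hψ
  rcases hψ with (h | h) | h
  · rcases h with rfl | rfl | rfl | rfl | rfl | rfl | rfl
    · simp [extAx, Sentence.Realize, Formula.Realize, realize_memF, mvar, Fin.snoc]
      intro a ha b hb h
      ext z
      exact ⟨fun hz => (h z (hS.mem ha hz)).1 hz, fun hz => (h z (hS.mem hb hz)).2 hz⟩
    · simp [emptyAx, Sentence.Realize, Formula.Realize, realize_memF, mvar, Fin.snoc]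
      exact ⟨∅, hS.empty, fun a _ => ZFSet.notMem_empty a⟩
    · simp [pairAx, Sentence.Realize, Formula.Realize, realize_memF, mvar, Fin.snoc]
      intro a ha b hb
      exact ⟨{a, b}, by simp, hS.doubleton hc ha hb, by simp⟩
    · simp [unionAx, Sentence.Realize, Formula.Realize, realize_memF, mvar, Fin.snoc]
      intro a ha
      refine ⟨ZFSet.sUnion a, hS.sUnion hc ha, ?_⟩
      intro x hx y hy hxy hya
      exact ZFSet.mem_sUnion.2 ⟨y, hya, hxy⟩
    · simp [infAx, Sentence.Realize, Formula.Realize, realize_memF, mvar, Fin.snoc]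
      obtain ⟨w, hw, h0, h1⟩ := hS.omega hc
      refine ⟨w, ⟨∅, h0, hS.empty, fun a _ => ZFSet.notMem_empty a⟩, hw, ?_⟩
      intro x hx hxw
      exact ⟨Insert.insert x x, h1 x hxw, hS.insert hc hx hx, fun a _ => by
        rw [ZFSet.mem_insert_iff, or_comm]⟩
    · simp [foundAx, Sentence.Realize, Formula.Realize, realize_memF, mvar, Fin.snoc]
      intro a ha b hb hba
      obtain ⟨y, hy, hay⟩ := ZFSet.regularity a (by rintro rfl; exact ZFSet.notMem_empty _ hba)
      refine ⟨y, hy, hS.mem ha hy, ?_⟩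
      intro z hz hza hzy
      have : z ∈ a ∩ y := ZFSet.mem_inter.2 ⟨hza, hzy⟩
      rw [hay] at this
      exact ZFSet.notMem_empty _ this
    · simp [choiceAx, Sentence.Realize, Formula.Realize, realize_memF, mvar, Fin.snoc]
      intro a ha hne hdis
      have hch : ∀ x : a.toSet, ∃ y, y ∈ x.1 := fun x => by
        obtain ⟨y, _, hy⟩ := hne x.1 (hS.mem ha x.2) x.2
        exact ⟨y, hy⟩
      choose s hs using hch
      have : Small.{u} a.toSet := ZFSet.small_coe a
      refine ⟨ZFSet.range s, hS.range s ((hS a).1 ha).1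
        (fun x => hS.mem (hS.mem ha x.2) (hs x)), ?_⟩
      intro x hx hxa
      refine ⟨s ⟨x, hxa⟩, ⟨hs ⟨x, hxa⟩, ZFSet.mem_range_self _⟩, hS.mem hx (hs ⟨x, hxa⟩), ?_⟩
      intro y hy hyx hyr
      obtain ⟨z, rfl⟩ := ZFSet.mem_range.1 hyr
      have : z = ⟨x, hxa⟩ := by
        by_contra hne'
        refine hdis z.1 (hS.mem ha z.2) x hx z.2 hxa (fun h => hne' (Subtype.ext h)) _ (hs z) hy hyx
      rw [this]
  · obtain ⟨n, φ, rfl⟩ := Set.mem_iUnion.1 h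
    rw [sepAx_realize]
    intro xs a
    let b : ZFSet := ZFSet.sep (fun z => ∃ h : z ∈ S, φ.Realize (default : Empty → S)
      (Fin.snoc xs (⟨z, h⟩ : S) : Fin (n+1) → S)) a.1
    refine ⟨⟨b, hS.sub a.2 ZFSet.sep_subset⟩, ?_⟩
    intro x
    simp only [b, ZFSet.mem_sep]
    exact and_congr_right fun _ => ⟨fun ⟨_, h⟩ => h, fun h => ⟨x.2, h⟩⟩
  · obtain ⟨n, φ, rfl⟩ := Set.mem_iUnion.1 h
    rw [collAx_realize]
    intro xs a h
    have hch : ∀ x : a.1.toSet, ∃ y : S, φ.Realize (default : Empty → S)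
        (Fin.snoc (Fin.snoc xs (⟨x.1, hS.mem a.2 x.2⟩ : S) : Fin (n+1) → S) y : Fin (n+2) → S) :=
      fun x => h ⟨x.1, hS.mem a.2 x.2⟩ x.2
    choose s hs using hch
    have : Small.{u} a.1.toSet := ZFSet.small_coe a.1
    refine ⟨⟨ZFSet.range (fun x => (s x).1), hS.range _ ((hS a.1).1 a.2).1 (fun x => (s x).2)⟩, ?_⟩
    intro x hx
    exact ⟨s ⟨x.1, hx⟩, ZFSet.mem_range.2 ⟨⟨x.1, hx⟩, rfl⟩, hs ⟨x.1, hx⟩⟩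
end

end

section
open Cardinal Set FirstOrder FirstOrder.Language

theorem regular_of_powerlt {c : Cardinal.{u}} (hc : ℵ₀ ≤ c) (h : c ^< c = c) : c.IsRegular := by
  refine ⟨hc, ?_⟩
  by_contra hlt
  rw [not_le] at hlt
  have h1 := le_powerlt c hlt
  rw [h] at h1
  exact absurd (lt_power_cof_ord hc) (not_lt.2 h1)

theorem bounded_in {κ : ZFSet.{u}} (hκ : IsCardZ κ) (hreg : (zcard κ).IsRegular)
    {ι : Type (u+1)} (hι : #ι < zcard κ) (g : ι → ZFSet.{u}) (hg : ∀ z, g z ∈ κ) :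
    ∃ i ∈ κ, ∀ z, g z ∈ i := by
  by_contra hcon
  push Not at hcon
  have hsub : κ.toSet ⊆ ⋃ z, (insert (g z) (g z).toSet) := by
    intro i hi
    obtain ⟨z, hz⟩ := hcon i hi
    refine Set.mem_iUnion.2 ⟨z, ?_⟩
    rcases (hκ.1.mem hi).mem_trichotomous (hκ.1.mem (hg z)) with h | h | h
    · exact Or.inr h
    · exact Or.inl h
    · exact absurd h hz
  have h1 : #(⋃ z, (insert (g z) (g z).toSet) : Set ZFSet.{u}) < zcard κ := by
    refine (card_iUnion_lt_iff_forall_of_isRegular hreg hι).2 fun z => ?_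
    refine lt_of_le_of_lt mk_insert_le ?_
    exact add_lt_of_lt hreg.aleph0_le (hκ.2 _ (hg z)) (one_lt_aleph0.trans_le hreg.aleph0_le)
  exact absurd (mk_le_mk_of_subset hsub) (not_le.2 h1)

/-- The set coding the function `g` with domain `d`. -/
noncomputable def zcode (d : ZFSet.{u}) (g : ZFSet.{u} → ZFSet.{u}) : ZFSet.{u} :=
  haveI : Small.{u} d.toSet := ZFSet.small_coe d
  ZFSet.range (fun b : d.toSet => ZFSet.pair b.1 (g b.1))

theorem mem_zcode {d : ZFSet.{u}} {g : ZFSet.{u} → ZFSet.{u}} {z : ZFSet.{u}} :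
    z ∈ zcode d g ↔ ∃ b, b ∈ d ∧ z = ZFSet.pair b (g b) := by
  have : Small.{u} d.toSet := ZFSet.small_coe d
  unfold zcode
  rw [ZFSet.mem_range]
  exact ⟨fun ⟨b, hb⟩ => ⟨b.1, b.2, hb.symm⟩, fun ⟨b, hb, h⟩ => ⟨⟨b, hb⟩, h.symm⟩⟩

theorem pair_mem_zcode {d : ZFSet.{u}} {g : ZFSet.{u} → ZFSet.{u}} {a v : ZFSet.{u}} :
    ZFSet.pair a v ∈ zcode d g ↔ a ∈ d ∧ v = g a := by
  rw [mem_zcode]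
  constructor
  · rintro ⟨b, hb, h⟩
    obtain ⟨rfl, rfl⟩ := ZFSet.pair_inj.1 h
    exact ⟨hb, rfl⟩
  · rintro ⟨h, rfl⟩
    exact ⟨a, h, rfl⟩

theorem isFunc_zcode {d y : ZFSet.{u}} {g : ZFSet.{u} → ZFSet.{u}} (h : ∀ b, b ∈ d → g b ∈ y) :
    ZFSet.IsFunc d y (zcode d g) := by
  refine ⟨?_, ?_⟩
  · intro z hz
    obtain ⟨b, hb, rfl⟩ := mem_zcode.1 hz
    exact ZFSet.pair_mem_prod.2 ⟨hb, h b hb⟩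
  · intro z hz
    exact ⟨g z, pair_mem_zcode.2 ⟨hz, rfl⟩, fun w hw => (pair_mem_zcode.1 hw).2⟩

theorem isFunc_eq_zcode {d y f : ZFSet.{u}} (h : ZFSet.IsFunc d y f) :
    ∃ g : ZFSet.{u} → ZFSet.{u}, f = zcode d g ∧ ∀ b, b ∈ d → g b ∈ y := by
  have h1 : ∀ b : ZFSet.{u}, ∃ w, b ∈ d → ZFSet.pair b w ∈ f := by
    intro b
    by_cases hb : b ∈ d
    · obtain ⟨w, hw, _⟩ := h.2 b hb
      exact ⟨w, fun _ => hw⟩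
    · exact ⟨∅, fun h => absurd h hb⟩
  choose g hg using h1
  refine ⟨g, ?_, fun b hb => (ZFSet.pair_mem_prod.1 (h.1 (hg b hb))).2⟩
  ext z
  rw [mem_zcode]
  constructor
  · intro hz
    obtain ⟨b, hb, w, hw, rfl⟩ := ZFSet.mem_prod.1 (h.1 hz)
    refine ⟨b, hb, ?_⟩
    rw [(h.2 b hb).unique hz (hg b hb)]
  · rintro ⟨b, hb, rfl⟩
    exact hg b hb

theorem IsHer.zcode {S : Set ZFSet.{u}} {c : Cardinal.{u+1}} (hS : IsHer c S) (hc : ℵ₀ ≤ c)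
    {d : ZFSet.{u}} {g : ZFSet.{u} → ZFSet.{u}} (hd : d ∈ S) (hg : ∀ b, b ∈ d → g b ∈ S) :
    zcode d g ∈ S := by
  have : Small.{u} d.toSet := ZFSet.small_coe d
  exact hS.range _ ((hS d).1 hd).1 fun b => hS.pair hc (hS.mem hd b.2) (hg _ b.2)

theorem IsHer.ord {S : Set ZFSet.{u}} {κ : ZFSet.{u}} (hS : IsHer (zcard κ) S)
    (hκ : κ.IsOrdinal) : ∀ x, x ⊆ κ → x.IsOrdinal → x ∈ S := by
  intro x
  induction x using ZFSet.inductionOn with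
  | _ x ih =>
    intro hx hxo
    exact (hS x).2 ⟨zcard_mono hx, fun y hy => ih y hy
      (hκ.subset_of_mem (hx hy)) (hxo.mem hy)⟩

/-- Tarski–Vaught closed subsets of `S`. -/
def TVClosed (S Y : Set ZFSet.{u}) : Prop :=
  ∀ (n : ℕ) (φ : memLang.BoundedFormula Empty (n+1)) (x : Fin n → S), (∀ i, (x i).1 ∈ Y) →
    (∃ z : S, φ.Realize Empty.elim (Fin.snoc x z : Fin (n+1) → S)) →
    ∃ z : S, z.1 ∈ Y ∧ φ.Realize Empty.elim (Fin.snoc x z : Fin (n+1) → S)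

theorem memLang_card : memLang.card ≤ ℵ₀ := by
  have h2 : Countable (Σ n, memRelType n) := by
    refine Function.Injective.countable (f := fun p : (Σ n, memRelType n) => p.1) ?_
    rintro ⟨n, a⟩ ⟨m, b⟩ h
    cases a; cases b; rfl
  have h1 : Countable (Σ n : ℕ, memLang.Functions n) :=
    Function.Injective.countable (f := fun p => p.1) fun a => a.2.elim
  have : Countable memLang.Symbols := by
    unfold Language.Symbols
    have : Countable (Σ n, memLang.Relations n) := h2
    infer_instance
  exact mk_le_aleph0

theorem exists_TV {S X : Set ZFSet.{u}} {c : Cardinal.{u+1}} (hc : ℵ₀ ≤ c) (hS : c ≤ #S)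
    (hX : X ⊆ S) (hXc : #X ≤ c) :
    ∃ Y : Set ZFSet.{u}, X ⊆ Y ∧ Y ⊆ S ∧ #Y ≤ c ∧ TVClosed S Y := by
  let s : Set S := {z | z.1 ∈ X}
  have hs : #s ≤ c := by
    refine le_trans (mk_le_of_injective (f := fun z : s => (⟨z.1.1, z.2⟩ : X)) ?_) hXc
    intro a b h
    have h' := congrArg Subtype.val h
    exact Subtype.ext (Subtype.ext h')
  obtain ⟨N, hsN, hN⟩ := exists_elementarySubstructure_card_eq memLang s c hc
    (by simpa using hs) (by
      have h0 : lift.{u+1, 0} memLang.card ≤ lift.{u+1, 0} ℵ₀ := lift_le.2 memLang_card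
      simpa using h0.trans (by simpa using hc)) (by simpa using hS)
  refine ⟨Subtype.val '' (N : Set S), ?_, ?_, ?_, ?_⟩
  · intro x hx
    exact ⟨⟨x, hX hx⟩, hsN hx, rfl⟩
  · rintro _ ⟨x, _, rfl⟩
    exact x.2
  · refine mk_image_le.trans ?_
    have : #N = c := by simpa using hN
    exact this.le
  · intro n φ x hx ⟨z, hz⟩
    have hx' : ∀ i, x i ∈ N := by
      intro i
      obtain ⟨w, hw, h⟩ := hx i
      rw [← Subtype.ext h]; exact hw
    let x' : Fin n → N := fun i => ⟨x i, hx' i⟩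
    have h1 : (φ.ex).Realize (N.subtype ∘ Empty.elim) (N.subtype ∘ x') := by
      rw [BoundedFormula.realize_ex]
      refine ⟨z, ?_⟩
      convert hz
      rfl
    rw [ElementaryEmbedding.map_boundedFormula, BoundedFormula.realize_ex] at h1
    obtain ⟨w, hw⟩ := h1
    rw [← ElementaryEmbedding.map_boundedFormula N.subtype] at hw
    refine ⟨w.1, ⟨w.1, w.2, rfl⟩, ?_⟩
    convert hw using 1
    rw [Fin.comp_snoc]; rfl

theorem TVClosed.elem {S Y : Set ZFSet.{u}} (hY : Y ⊆ S) (h : TVClosed S Y) : ElemSub Y S := by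
  refine ⟨hY, ?_⟩
  have ht : ∀ {n : ℕ} (t : memLang.Term (Empty ⊕ Fin n)) (x : Fin n → Y),
      (t.realize (Sum.elim Empty.elim x) : Y).1 =
      (t.realize (Sum.elim Empty.elim (fun i => (⟨x i, hY (x i).2⟩ : S))) : S).1 := by
    intro n t x
    cases t with
    | var i =>
      rcases i with i | i
      · exact i.elim
      · rfl
    | func f _ => exact (f : Empty).elim
  intro n φ
  induction φ with
  | falsum => intro x; exact Iff.rfl
  | equal t s =>
    intro x
    show (_ = _) ↔ (_ = _)
    rw [Subtype.ext_iff, Subtype.ext_iff, ht, ht]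
  | rel R ts =>
    intro x
    cases R with
    | mem =>
      show ((_ : Y).1 ∈ (_ : Y).1) ↔ ((_ : S).1 ∈ (_ : S).1)
      rw [ht, ht]
  | imp φ ψ ih1 ih2 =>
    intro x
    rw [BoundedFormula.realize_imp, BoundedFormula.realize_imp, ih1, ih2]
  | all φ ih =>
    intro x
    rw [BoundedFormula.realize_all, BoundedFormula.realize_all]
    have key : ∀ z : Y, φ.Realize Empty.elim (Fin.snoc x z : Fin (_+1) → Y) ↔
        φ.Realize Empty.elim (Fin.snoc (fun i => (⟨x i, hY (x i).2⟩ : S))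
          (⟨z, hY z.2⟩ : S) : Fin (_+1) → S) := by
      intro z
      rw [ih]
      have := Fin.comp_snoc (fun y : Y => (⟨y, hY y.2⟩ : S)) x z
      rw [show (fun i => (⟨((Fin.snoc x z : Fin (_+1) → Y) i).1, hY ((Fin.snoc x z : Fin (_+1) → Y) i).2⟩ : S)) = _ from this]
      rfl
    constructor
    · intro hall
      by_contra hcon
      push Not at hcon
      obtain ⟨z, hzY, hz⟩ := h _ φ.not (fun i => (⟨x i, hY (x i).2⟩ : S)) (fun i => (x i).2)
        (by obtain ⟨z, hz⟩ := hcon; exact ⟨z, by rw [BoundedFormula.realize_not]; exact hz⟩)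
      rw [BoundedFormula.realize_not] at hz
      exact hz ((key ⟨z.1, hzY⟩).1 (hall _))
    · intro hall z
      exact (key z).2 (hall _)

theorem card_funcs {κ : ZFSet.{u}} (hc : ℵ₀ ≤ zcard κ) (hκ : IsCardZ κ)
    (hlt : (zcard κ) ^< (zcard κ) = zcard κ) {X : Set ZFSet.{u}} (hX : #X ≤ zcard κ) :
    #{f | ∃ δ y, δ ∈ κ ∧ y.toSet ⊆ X ∧ ZFSet.IsFunc δ y f} ≤ zcard κ := by
  classical
  let D : Type (u+1) := Σ δ : κ.toSet, (δ.1.toSet → X)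
  let ev : D → ZFSet.{u} := fun p => zcode p.1.1 (fun b => if h : b ∈ p.1.1 then (p.2 ⟨b, h⟩).1 else ∅)
  have hsub : {f | ∃ δ y, δ ∈ κ ∧ y.toSet ⊆ X ∧ ZFSet.IsFunc δ y f} ⊆ Set.range ev := by
    rintro f ⟨δ, y, hδ, hy, hf⟩
    obtain ⟨g, rfl, hg⟩ := isFunc_eq_zcode hf
    refine ⟨⟨⟨δ, hδ⟩, fun b => ⟨g b.1, hy (hg _ b.2)⟩⟩, ?_⟩
    ext z
    simp only [ev, mem_zcode]
    refine exists_congr fun b => and_congr_right fun hb => ?_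
    rw [dif_pos hb]
  refine (mk_le_mk_of_subset hsub).trans (mk_range_le.trans ?_)
  have h1 : ∀ δ : κ.toSet, #(δ.1.toSet → X) ≤ zcard κ := by
    intro δ
    have h2 : #(δ.1.toSet → X) = #X ^ zcard δ.1 := by rw [zcard, power_def]
    rw [h2]
    refine (power_le_power_right hX).trans ?_
    exact (le_powerlt _ (hκ.2 _ δ.2)).trans hlt.le
  have h3 : #D = Cardinal.sum (fun δ : κ.toSet => #(δ.1.toSet → X)) := mk_sigma _
  rw [h3]
  have h4 := Cardinal.sum_le_sum _ _ h1
  refine h4.trans ?_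
  rw [Cardinal.sum_const']
  exact (mul_eq_self hc).le

/-- One step of the construction of `κ`-models. -/
theorem exists_step {κ : ZFSet.{u}} (hc : ℵ₀ ≤ zcard κ) (hκ : IsCardZ κ)
    (hlt : (zcard κ) ^< (zcard κ) = zcard κ) {S X : Set ZFSet.{u}} (hS : IsHer (zcard κ) S)
    (hX : X ⊆ S) (hXc : #X ≤ zcard κ) :
    ∃ Y : Set ZFSet.{u}, X ⊆ Y ∧ Y ⊆ S ∧ #Y ≤ zcard κ ∧ TVClosed S Y ∧
      ∀ δ y f : ZFSet, δ ∈ κ → y.toSet ⊆ X → ZFSet.IsFunc δ y f → f ∈ Y := by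
  have hκS : κ ∈ S := hS.ord hκ.1 κ (fun _ h => h) hκ.1
  have hSc : zcard κ ≤ #S := mk_le_mk_of_subset (fun x hx => hS.mem hκS hx)
  let X' := X ∪ {f | ∃ δ y, δ ∈ κ ∧ y.toSet ⊆ X ∧ ZFSet.IsFunc δ y f}
  have hX'S : X' ⊆ S := by
    rintro f (hf | ⟨δ, y, hδ, hy, hf⟩)
    · exact hX hf
    · obtain ⟨g, rfl, hg⟩ := isFunc_eq_zcode hf
      exact hS.zcode hc (hS.mem hκS hδ) fun b hb => hX (hy (hg b hb))
  have hX'c : #X' ≤ zcard κ := by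
    refine (mk_union_le _ _).trans ?_
    exact add_le_of_le hc hXc (card_funcs hc hκ hlt hXc)
  obtain ⟨Y, h1, h2, h3, h4⟩ := exists_TV hc hSc hX'S hX'c
  exact ⟨Y, subset_union_left.trans h1, h2, h3, h4, fun δ y f hδ hy hf =>
    h1 (Or.inr ⟨δ, y, hδ, hy, hf⟩)⟩

theorem exists_kappaModel {κ : ZFSet.{u}} (hunc : ℵ₀ < zcard κ) (hκ : IsCardZ κ)
    (hlt : (zcard κ) ^< (zcard κ) = zcard κ) {S X : Set ZFSet.{u}} (hS : IsHer (zcard κ) S)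
    (hX : X ⊆ S) (hXc : #X ≤ zcard κ) :
    ∃ M : Set ZFSet.{u}, X ⊆ M ∧ KappaModelZ κ M ∧ ElemSub M S := by
  classical
  have hc := hunc.le
  have hreg := regular_of_powerlt hc hlt
  have hκS : κ ∈ S := hS.ord hκ.1 κ (fun _ h => h) hκ.1
  let X₀ : Set ZFSet.{u} := X ∪ insert κ κ.toSet
  have hX₀S : X₀ ⊆ S := by
    rintro x (hx | rfl | hx)
    · exact hX hx
    · exact hκS
    · exact hS.mem hκS hx
  have hX₀c : #X₀ ≤ zcard κ := by
    refine (mk_union_le _ _).trans (add_le_of_le hc hXc (mk_insert_le.trans ?_))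
    exact add_le_of_le hc le_rfl (one_le_aleph0.trans hc)
  have hst : ∀ Z : Set ZFSet.{u}, ∃ Y : Set ZFSet.{u}, (Z ⊆ S ∧ #Z ≤ zcard κ) →
      (Z ⊆ Y ∧ Y ⊆ S ∧ #Y ≤ zcard κ ∧ TVClosed S Y ∧
      ∀ δ y f : ZFSet, δ ∈ κ → y.toSet ⊆ Z → ZFSet.IsFunc δ y f → f ∈ Y) := by
    intro Z
    by_cases hZ : Z ⊆ S ∧ #Z ≤ zcard κ
    · obtain ⟨Y, hY⟩ := exists_step hc hκ hlt hS hZ.1 hZ.2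
      exact ⟨Y, fun _ => hY⟩
    · exact ⟨∅, fun h => absurd h hZ⟩
  choose hull hhull using hst
  let M : ZFSet.{u} → Set ZFSet.{u} :=
    ZFSet.mem_wf.fix (fun i rec => hull (X₀ ∪ ⋃ b : i.toSet, rec b.1 b.2))
  let A : ZFSet.{u} → Set ZFSet.{u} := fun i => X₀ ∪ ⋃ b : i.toSet, M b.1
  have hM : ∀ i, M i = hull (A i) := fun i => ZFSet.mem_wf.fix_eq _ i
  have hgood : ∀ i, i ∈ κ → (A i ⊆ S ∧ #(A i) ≤ zcard κ) := by
    intro i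
    induction i using ZFSet.inductionOn with
    | _ i ih =>
      intro hi
      have hb : ∀ b : i.toSet, M b.1 ⊆ S ∧ #(M b.1) ≤ zcard κ := by
        intro b
        have := hhull _ (ih b.1 b.2 (hκ.1.mem_trans b.2 hi))
        rw [hM]
        exact ⟨this.2.1, this.2.2.1⟩
      refine ⟨union_subset hX₀S (iUnion_subset fun b => (hb b).1), ?_⟩
      refine (mk_union_le _ _).trans (add_le_of_le hc hX₀c ((mk_iUnion_le _).trans ?_))
      have h1 : #i.toSet ≤ zcard κ := (hκ.2 i hi).le
      have h2 : (⨆ b : i.toSet, #(M b.1)) ≤ zcard κ := ciSup_le' fun b => (hb b).2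
      calc #i.toSet * (⨆ b : i.toSet, #(M b.1)) ≤ zcard κ * zcard κ := mul_le_mul' h1 h2
        _ = zcard κ := mul_eq_self hc
  have hP : ∀ i, i ∈ κ → (A i ⊆ M i ∧ M i ⊆ S ∧ #(M i) ≤ zcard κ ∧ TVClosed S (M i) ∧
      ∀ δ y f : ZFSet, δ ∈ κ → y.toSet ⊆ A i → ZFSet.IsFunc δ y f → f ∈ M i) := by
    intro i hi
    rw [hM]
    exact hhull _ (hgood i hi)
  let N : Set ZFSet.{u} := ⋃ b : κ.toSet, M b.1
  have hbdd : ∀ {ι : Type (u+1)} (v : ι → ZFSet.{u}), #ι < zcard κ → (∀ z, v z ∈ N) →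
      ∃ i ∈ κ, ∀ z, v z ∈ A i := by
    intro ι v hι hv
    have : ∀ z, ∃ b : κ.toSet, v z ∈ M b.1 := fun z => Set.mem_iUnion.1 (hv z)
    choose g hg using this
    obtain ⟨i, hi, hgi⟩ := bounded_in hκ hreg hι (fun z => (g z).1) (fun z => (g z).2)
    exact ⟨i, hi, fun z => Or.inr (Set.mem_iUnion.2 ⟨⟨_, hgi z⟩, hg z⟩)⟩
  have hMN : ∀ i, i ∈ κ → M i ⊆ N := fun i hi x hx => Set.mem_iUnion.2 ⟨⟨i, hi⟩, hx⟩
  obtain ⟨i₀, hi₀⟩ : ∃ i, i ∈ κ := by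
    by_contra hcon
    push Not at hcon
    have : zcard κ = 0 := by
      rw [zcard, mk_eq_zero_iff]; exact ⟨fun x => hcon x.1 x.2⟩
    rw [this] at hunc
    exact absurd hunc (by simp)
  have hXN : X₀ ⊆ N := (subset_union_left.trans (hP i₀ hi₀).1).trans (hMN i₀ hi₀)
  have hNS : N ⊆ S := iUnion_subset fun b => (hP b.1 b.2).2.1
  have hTV : TVClosed S N := by
    intro n φ x hx hz
    obtain ⟨i, hi, hxi⟩ := hbdd (fun k : ULift.{u+1} (Fin n) => (x k.down).1)
      (lt_of_lt_of_le (lt_aleph0_of_finite _) hc) (fun k => hx _)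
    obtain ⟨z, hz1, hz2⟩ := (hP i hi).2.2.2.1 n φ x (fun k => (hP i hi).1 (hxi ⟨k⟩)) hz
    exact ⟨z, hMN i hi hz1, hz2⟩
  have hel : ElemSub N S := hTV.elem hNS
  refine ⟨N, subset_union_left.trans hXN, ⟨⟨?_, subset_union_right.trans hXN, ?_⟩, ?_⟩, hel⟩
  · apply le_antisymm
    · refine (mk_iUnion_le _).trans ?_
      have h1 : #κ.toSet ≤ zcard κ := le_rfl
      have h2 : (⨆ b : κ.toSet, #(M b.1)) ≤ zcard κ := ciSup_le' fun b => (hP b.1 b.2).2.2.1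
      calc #κ.toSet * (⨆ b : κ.toSet, #(M b.1)) ≤ zcard κ * zcard κ := mul_le_mul' h1 h2
        _ = zcard κ := mul_eq_self hc
    · exact mk_le_mk_of_subset (((subset_insert κ κ.toSet).trans subset_union_right).trans hXN)
  · have hz := hS.zfc hc
    rw [Theory.model_iff] at hz ⊢
    intro ψ hψ
    have h1 := hz ψ hψ
    obtain ⟨hsub, hel⟩ := hel
    have h2 := hel 0 ψ default
    have e1 : (Empty.elim : Empty → N) = default := Subsingleton.elim _ _
    have e2 : (Empty.elim : Empty → S) = default := Subsingleton.elim _ _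
    rw [e1, e2] at h2
    have e3 : ∀ x : Fin 0 → S, BoundedFormula.Realize ψ default x := fun x => by
      rw [Subsingleton.elim x default]; exact h1
    exact h2.2 (e3 _)
  · intro δ y f hδ hy hf
    obtain ⟨g, rfl, hg⟩ := isFunc_eq_zcode hf
    obtain ⟨i, hi, hgi⟩ := hbdd (fun b : δ.toSet => g b.1) (hκ.2 δ hδ)
      (fun b => hy (hg b.1 b.2))
    have : Small.{u} δ.toSet := ZFSet.small_coe δ
    refine hMN i hi ((hP i hi).2.2.2.2 δ (ZFSet.range (fun b : δ.toSet => g b.1)) _ hδ ?_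
      (isFunc_zcode ?_))
    · intro z hz
      obtain ⟨b, rfl⟩ := ZFSet.mem_range.1 hz
      exact hgi b
    · intro b hb
      exact ZFSet.mem_range.2 ⟨⟨b, hb⟩, rfl⟩

end

section
open Cardinal Set

theorem zcode_congr {d : ZFSet.{u}} {g g' : ZFSet.{u} → ZFSet.{u}} (h : ∀ b, b ∈ d → g b = g' b) :
    zcode d g = zcode d g' := by
  ext z
  rw [mem_zcode, mem_zcode]
  refine exists_congr fun b => and_congr_right fun hb => ?_
  rw [h b hb]

open Classical in
/-- A small collection of sets, as a set. -/
noncomputable def zOf (Y : Set ZFSet.{u}) : ZFSet.{u} :=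
  if _h : Small.{u} Y then ZFSet.range (fun y : Y => y.1) else ∅

theorem toSet_zOf {κ : ZFSet.{u}} {Y : Set ZFSet.{u}} (hY : #Y ≤ zcard κ) :
    (zOf Y).toSet = Y := by
  have hs : Small.{u} κ.toSet := ZFSet.small_coe κ
  obtain ⟨f⟩ : Nonempty (Y ↪ κ.toSet) := by
    have : #Y ≤ #κ.toSet := hY
    exact Cardinal.le_def _ _ |>.1 this
  have : Small.{u} Y := small_of_injective f.injective
  unfold zOf
  rw [dif_pos this, toSet_range]
  exact Subtype.range_val

theorem zOf_mem {κ : ZFSet.{u}} {S Y : Set ZFSet.{u}} (hS : IsHer (zcard κ) S)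
    (hY : #Y ≤ zcard κ) (hYS : Y ⊆ S) : zOf Y ∈ S := by
  have h := toSet_zOf hY
  refine (hS _).2 ⟨by rw [zcard, h]; exact hY, fun y hy => hYS ?_⟩
  rw [← h]; exact hy

/-- The subsets of `κ` and the `κ`-sequences of subsets of `κ`. -/
def EZ (κ : ZFSet.{u}) : Set ZFSet.{u} :=
  {x | x ⊆ κ} ∪ {m | ZFSet.IsFunc κ (ZFSet.powerset κ) m}

theorem card_EZ {κ : ZFSet.{u}} (hc : ℵ₀ ≤ zcard κ) : #(EZ κ) ≤ 2 ^ zcard κ := by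
  classical
  have h1 : #{x : ZFSet.{u} | x ⊆ κ} ≤ 2 ^ zcard κ := by
    have : (2 : Cardinal.{u+1}) ^ zcard κ = #(Set κ.toSet) := by rw [mk_set]; rfl
    rw [this]
    refine mk_le_of_injective (f := fun x => {k : κ.toSet | k.1 ∈ x.1}) ?_
    intro x y h
    apply Subtype.ext
    ext z
    constructor
    · intro hz
      have h2 : (⟨z, x.2 hz⟩ : κ.toSet) ∈ {k : κ.toSet | k.1 ∈ x.1} := hz
      rw [show {k : κ.toSet | k.1 ∈ x.1} = {k : κ.toSet | k.1 ∈ y.1} from h] at h2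
      exact h2
    · intro hz
      have h2 : (⟨z, y.2 hz⟩ : κ.toSet) ∈ {k : κ.toSet | k.1 ∈ y.1} := hz
      rw [show {k : κ.toSet | k.1 ∈ y.1} = {k : κ.toSet | k.1 ∈ x.1} from h.symm] at h2
      exact h2
  refine (mk_union_le _ _).trans (add_le_of_le (hc.trans (cantor _).le) h1 ?_)
  let ev : (κ.toSet → {x : ZFSet.{u} | x ⊆ κ}) → ZFSet.{u} :=
    fun p => zcode κ (fun b => if h : b ∈ κ then (p ⟨b, h⟩).1 else ∅)
  have hsub : {m | ZFSet.IsFunc κ (ZFSet.powerset κ) m} ⊆ Set.range ev := by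
    intro f hf
    obtain ⟨g, rfl, hg⟩ := isFunc_eq_zcode hf
    refine ⟨fun b => ⟨g b.1, ZFSet.mem_powerset.1 (hg _ b.2)⟩, ?_⟩
    refine zcode_congr fun b hb => ?_
    rw [dif_pos hb]
  refine (mk_le_mk_of_subset hsub).trans (mk_range_le.trans ?_)
  have h2 : #(κ.toSet → {x : ZFSet.{u} | x ⊆ κ}) = #{x : ZFSet.{u} | x ⊆ κ} ^ zcard κ := by
    rw [zcard, power_def]
  rw [h2]
  refine (power_le_power_right h1).trans ?_
  rw [← power_mul, mul_eq_self hc]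

theorem exists_chal (κ γ : ZFSet.{u})
    (hκ : IsCardZ κ) (hunc : Cardinal.aleph0 < zcard κ)
    (hlt : (zcard κ) ^< (zcard κ) = zcard κ)
    (hch : (2 : Cardinal.{u + 1}) ^ (zcard κ) = Order.succ (zcard κ))
    (hγ : IsCardZ γ) (hγsucc : zcard γ = Order.succ (zcard κ)) :
    ∃ σ : ZFSet.{u} → (ZFSet.{u} → Set ZFSet.{u}) → Set ZFSet.{u}, ∀ Fs,
      (∀ i ∈ γ.toSet, ChalLegalAt κ γ (fun b => σ b (restrLt Fs b)) Fs i) ∧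
      ∀ x ∈ EZ κ, ∃ i ∈ γ.toSet, x ∈ σ i (restrLt Fs i) := by
  classical
  have hc := hunc.le
  have hS : IsHer (zcard κ) (HZ γ) := isHer_HZ γ _ hγsucc
  have hκS : κ ∈ HZ γ := hS.ord hκ.1 κ (fun _ h => h) hκ.1
  have hγS : ∀ i, i ∈ γ → i ∈ HZ γ := by
    intro i
    induction i using ZFSet.inductionOn with
    | _ i ih =>
      intro hi
      refine (hS i).2 ⟨?_, fun y hy => ih y hy (hγ.1.mem_trans hy hi)⟩
      have := hγ.2 i hi
      rw [hγsucc, Order.lt_succ_iff] at this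
      exact this
  have hES : EZ κ ⊆ HZ γ := by
    rintro x (hx | hx)
    · exact hS.sub hκS hx
    · obtain ⟨g, rfl, hg⟩ := isFunc_eq_zcode hx
      exact hS.zcode hc hκS fun b hb => hS.sub hκS (ZFSet.mem_powerset.1 (hg b hb))
  -- enumeration
  obtain ⟨e, heE, hesurj⟩ : ∃ e : ZFSet.{u} → ZFSet.{u}, (∀ i, e i ∈ EZ κ) ∧
      ∀ x ∈ EZ κ, ∃ i ∈ γ, e i = x := by
    have h1 : #(EZ κ) ≤ #γ.toSet := by
      have : #γ.toSet = Order.succ (zcard κ) := hγsucc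
      rw [this, ← hch]; exact card_EZ hc
    obtain ⟨f⟩ := (Cardinal.le_def _ _).1 h1
    have hκE : κ ∈ EZ κ := Or.inl (fun _ h => h)
    refine ⟨fun i => if h : ∃ x : EZ κ, (f x).1 = i then h.choose.1 else κ, ?_, ?_⟩
    · intro i
      by_cases h : ∃ x : EZ κ, (f x).1 = i
      · simp only [dif_pos h]; exact h.choose.2
      · simp only [dif_neg h]; exact hκE
    · intro x hx
      refine ⟨(f ⟨x, hx⟩).1, (f ⟨x, hx⟩).2, ?_⟩
      have h : ∃ y : EZ κ, (f y).1 = (f ⟨x, hx⟩).1 := ⟨_, rfl⟩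
      simp only [dif_pos h]
      have := f.injective (Subtype.ext h.choose_spec)
      rw [this]
  have hst : ∀ Z : Set ZFSet.{u}, ∃ Y : Set ZFSet.{u}, (Z ⊆ HZ γ ∧ #Z ≤ zcard κ) →
      (Z ⊆ Y ∧ KappaModelZ κ Y ∧ ElemSub Y (HZ γ)) := by
    intro Z
    by_cases hZ : Z ⊆ HZ γ ∧ #Z ≤ zcard κ
    · obtain ⟨Y, hY⟩ := exists_kappaModel hunc hκ hlt hS hZ.1 hZ.2
      exact ⟨Y, fun _ => hY⟩
    · exact ⟨∅, fun h => absurd h hZ⟩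
  choose hull hhull using hst
  let A : ZFSet.{u} → (ZFSet.{u} → Set ZFSet.{u}) → (ZFSet.{u} → Set ZFSet.{u}) → Set ZFSet.{u} :=
    fun i g Fs => {e i, zcode i (fun b => zOf (g b)), zcode i (fun b => zOf (Fs b ∩ g b))} ∪
      ⋃ b : i.toSet, g b.1
  have hAcongr : ∀ i g g' Fs Fs', (∀ b, b ∈ i → g b = g' b) → (∀ b, b ∈ i → Fs b = Fs' b) →
      A i g Fs = A i g' Fs' := by
    intro i g g' Fs Fs' h h'
    simp only [A]
    rw [zcode_congr (g := fun b => zOf (g b)) (g' := fun b => zOf (g' b))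
        (fun b hb => by rw [h b hb]),
      zcode_congr (g := fun b => zOf (Fs b ∩ g b)) (g' := fun b => zOf (Fs' b ∩ g' b))
        (fun b hb => by rw [h b hb, h' b hb])]
    congr 1
    exact iUnion_congr fun b => h b.1 b.2
  let M : (ZFSet.{u} → Set ZFSet.{u}) → ZFSet.{u} → Set ZFSet.{u} := fun Fs =>
    ZFSet.mem_wf.fix (fun i rec => hull (A i (fun b => if h : b ∈ i then rec b h else ∅) Fs))
  have hM : ∀ Fs i, M Fs i = hull (A i (M Fs) Fs) := by
    intro Fs i
    have h1 : M Fs i = hull (A i (fun b => if h : b ∈ i then M Fs b else ∅) Fs) :=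
      ZFSet.mem_wf.fix_eq _ i
    rw [h1]
    congr 1
    refine hAcongr _ _ _ _ _ (fun b hb => ?_) (fun _ _ => rfl)
    rw [dif_pos hb]
  have hMcongr : ∀ Fs Fs' i, i.IsOrdinal → (∀ b, b ∈ i → Fs b = Fs' b) → M Fs i = M Fs' i := by
    intro Fs Fs' i
    induction i using ZFSet.inductionOn with
    | _ i ih =>
      intro hi h
      rw [hM, hM]
      congr 1
      refine hAcongr _ _ _ _ _ (fun b hb => ?_) h
      exact ih b hb (hi.mem hb) fun x hx => h x (hi.mem_trans hx hb)
  have hgood : ∀ Fs i, i ∈ γ → (A i (M Fs) Fs ⊆ HZ γ ∧ #(A i (M Fs) Fs) ≤ zcard κ) := by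
    intro Fs i
    induction i using ZFSet.inductionOn with
    | _ i ih =>
      intro hi
      have hb : ∀ b, b ∈ i → M Fs b ⊆ HZ γ ∧ #(M Fs b) ≤ zcard κ := by
        intro b hb
        have := hhull _ (ih b hb (hγ.1.mem_trans hb hi))
        rw [hM]
        exact ⟨this.2.2.1, this.2.1.1.1.le⟩
      have hic : #i.toSet ≤ zcard κ := ((hS i).1 (hγS i hi)).1
      constructor
      · refine union_subset ?_ (iUnion_subset fun b => (hb b.1 b.2).1)
        rintro x (rfl | rfl | rfl)
        · exact hES (heE i)
        · exact hS.zcode hc (hγS i hi) fun b hbi => zOf_mem hS (hb b hbi).2 (hb b hbi).1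
        · exact hS.zcode hc (hγS i hi) fun b hbi => zOf_mem hS
            ((mk_le_mk_of_subset inter_subset_right).trans (hb b hbi).2)
            (inter_subset_right.trans (hb b hbi).1)
      · refine (mk_union_le _ _).trans (add_le_of_le hc ?_ ((mk_iUnion_le _).trans ?_))
        · refine le_trans ?_ hc
          exact (lt_aleph0_of_finite _).le
        · have h2 : (⨆ b : i.toSet, #(M Fs b.1)) ≤ zcard κ := ciSup_le' fun b => (hb b.1 b.2).2
          calc #i.toSet * (⨆ b : i.toSet, #(M Fs b.1)) ≤ zcard κ * zcard κ := mul_le_mul' hic h2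
            _ = zcard κ := mul_eq_self hc
  have hP : ∀ Fs i, i ∈ γ → (A i (M Fs) Fs ⊆ M Fs i ∧ KappaModelZ κ (M Fs i) ∧
      ElemSub (M Fs i) (HZ γ)) := by
    intro Fs i hi
    have := hhull _ (hgood Fs i hi)
    rw [← hM] at this
    exact this
  refine ⟨fun i g => M g i, fun Fs => ?_⟩
  have hres : ∀ i, i ∈ γ → M (restrLt Fs i) i = M Fs i := by
    intro i hi
    refine hMcongr _ _ i (hγ.1.mem hi) fun b hb => ?_
    simp only [restrLt, if_pos hb]
  refine ⟨?_, ?_⟩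
  · intro i hi
    have hi' : i ∈ γ := hi
    have hres' : ∀ b, b ∈ i → M (restrLt Fs b) b = M Fs b := fun b hb =>
      hres b (hγ.1.mem_trans hb hi')
    have hcard : ∀ b, b ∈ i → #(M Fs b) ≤ zcard κ := fun b hb =>
      (hP Fs b (hγ.1.mem_trans hb hi')).2.1.1.1.le
    unfold ChalLegalAt
    simp only []
    rw [hres i hi']
    refine ⟨?_, (hP Fs i hi').2.1, (hP Fs i hi').2.2, ?_, ?_⟩
    · intro j hj
      rw [hres' j hj]
      intro x hx
      exact (hP Fs i hi').1 (Or.inr (Set.mem_iUnion.2 ⟨⟨j, hj⟩, hx⟩))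
    · refine ⟨zcode i (fun b => zOf (M Fs b)), (hP Fs i hi').1 (Or.inl (Or.inr (Or.inl rfl))),
        ⟨_, isFunc_zcode (y := ZFSet.sUnion (ZFSet.sUnion
          (zcode i (fun b => zOf (M Fs b))))) ?_⟩, ?_⟩
      · intro b hb
        refine ZFSet.mem_sUnion.2 ⟨{b, zOf (M Fs b)}, ZFSet.mem_sUnion.2
          ⟨_, mem_zcode.2 ⟨b, hb, rfl⟩, ?_⟩, ?_⟩ <;> simp [ZFSet.pair]
      · intro b v hb hv
        rw [(pair_mem_zcode.1 hv).2]
        beta_reduce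
        rw [hres' b hb]
        exact toSet_zOf (hcard b hb)
    · refine ⟨zcode i (fun b => zOf (Fs b ∩ M Fs b)),
        (hP Fs i hi').1 (Or.inl (Or.inr (Or.inr rfl))),
        ⟨_, isFunc_zcode (y := ZFSet.sUnion (ZFSet.sUnion
          (zcode i (fun b => zOf (Fs b ∩ M Fs b))))) ?_⟩, ?_⟩
      · intro b hb
        refine ZFSet.mem_sUnion.2 ⟨{b, zOf (Fs b ∩ M Fs b)}, ZFSet.mem_sUnion.2
          ⟨_, mem_zcode.2 ⟨b, hb, rfl⟩, ?_⟩, ?_⟩ <;> simp [ZFSet.pair]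
      · intro b v hb hv
        rw [(pair_mem_zcode.1 hv).2]
        beta_reduce
        rw [hres' b hb]
        exact toSet_zOf ((mk_le_mk_of_subset inter_subset_right).trans (hcard b hb))
  · intro x hx
    obtain ⟨i, hi, rfl⟩ := hesurj x hx
    refine ⟨i, hi, ?_⟩
    show e i ∈ M (restrLt Fs i) i
    rw [hres i hi]
    exact (hP Fs i hi).1 (Or.inl (Or.inl rfl))

theorem filter_measurable (κ γ : ZFSet.{u})
    (hκ : IsCardZ κ) (hunc : Cardinal.aleph0 < zcard κ)
    (hlt : (zcard κ) ^< (zcard κ) = zcard κ)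
    (hch : (2 : Cardinal.{u + 1}) ^ (zcard κ) = Order.succ (zcard κ))
    (hγ : IsCardZ γ) (hγsucc : zcard γ = Order.succ (zcard κ)) (hF : FilterPropZ κ γ) :
    MeasurableZ κ := by
  classical
  have hc := hunc.le
  have hreg := regular_of_powerlt hc hlt
  have hγreg : IsRegCard γ := ⟨hγ.1, by rw [hγsucc]; exact isRegular_succ hc, hγ.2⟩
  have hκγ : κ ∈ γ := by
    rcases hκ.1.mem_or_subset hγ.1 with h | h
    · exact h
    · have := zcard_mono h
      rw [hγsucc] at this
      exact absurd this (not_le.2 (Order.lt_succ _))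
  obtain ⟨σ, hσ⟩ := exists_chal κ γ hκ hunc hlt hch hγ hγsucc
  have hno : ¬ ChalWS κ γ γ σ := fun h => hF γ hγreg hκγ ⟨σ, h⟩
  unfold ChalWS at hno
  push Not at hno
  obtain ⟨Fs, hFs⟩ := hno
  obtain ⟨-, hwin⟩ := hFs (fun i hi _ => (hσ Fs).1 i hi)
  obtain ⟨hfil, hmeas, hdiag⟩ := hwin
  have hall : ∀ x ∈ EZ κ, x ∈ ⋃ i ∈ γ.toSet, σ i (restrLt Fs i) := by
    intro x hx
    obtain ⟨i, hi, h⟩ := (hσ Fs).2 x hx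
    exact Set.mem_biUnion hi h
  generalize hFdef : (⋃ i ∈ γ.toSet, Fs i) = F at *
  have hsub := hfil.1
  have hult : ∀ A : ZFSet.{u}, A ⊆ κ → (A ∈ F ∨ (κ \ A) ∈ F) := fun A hA =>
    hmeas A (hall A (Or.inl hA)) hA
  have hdia : ∀ m, CodesFilterSeq κ F m → diagZ κ m ∈ F := by
    intro m hm
    refine hdiag m (hall m (Or.inr ?_)) hm
    obtain ⟨⟨y, hy⟩, hm2⟩ := hm
    obtain ⟨g, rfl, hg⟩ := isFunc_eq_zcode hy
    exact isFunc_zcode fun b hb => ZFSet.mem_powerset.2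
      (hsub _ (hm2 b _ hb (pair_mem_zcode.2 ⟨hb, rfl⟩)))
  have hpair : ∀ A B, A ∈ F → B ∈ F → zcard κ ≤ #{x | x ∈ A ∧ x ∈ B} := by
    intro A B hA hB
    have h := hfil.2 2 ![A, B] (by intro i; fin_cases i <;> assumption)
    rw [← h]
    refine mk_le_mk_of_subset ?_
    rintro x ⟨_, hx⟩
    rw [Set.mem_iInter] at hx
    exact ⟨hx 0, hx 1⟩
  have hbig : ∀ A, A ∈ F → zcard κ ≤ zcard A := by
    intro A hA
    refine (hpair A A hA hA).trans (mk_le_mk_of_subset ?_)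
    exact fun x hx => hx.1
  have hempty : (∅ : ZFSet.{u}) ∉ F := by
    intro h
    have := hbig _ h
    rw [zcard_empty] at this
    exact absurd (this.trans_lt aleph0_pos) (not_lt.2 hc)
  have hκF : κ ∈ F := by
    rcases hult κ (fun _ h => h) with h | h
    · exact h
    · have : (κ \ κ : ZFSet.{u}) = ∅ := by
        ext z; simp
      rw [this] at h
      exact absurd h hempty
  refine ⟨F, hsub, hempty, hult, ?_, ?_⟩
  · intro s hs hsc
    let B := ZFSet.sep (fun z => ∀ A, A ∈ s → z ∈ A) κ
    have hB : ∀ z, z ∈ B ↔ (z ∈ κ ∧ ∀ A, A ∈ s → z ∈ A) := fun z => ZFSet.mem_sep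
    refine ⟨B, ?_, hB⟩
    rcases hult B ZFSet.sep_subset with h | h
    · exact h
    exfalso
    have h1 : #s.toSet ≤ #κ.toSet := hsc.le
    obtain ⟨f⟩ := (Cardinal.le_def _ _).1 h1
    obtain ⟨i, hi, hfi⟩ := bounded_in hκ hreg hsc (fun A : s.toSet => (f A).1) (fun A => (f A).2)
    let g : ZFSet.{u} → ZFSet.{u} := fun a =>
      if h : ∃ A : s.toSet, (f A).1 = a then h.choose.1 else κ
    have hg1 : ∀ a, g a ∈ F := by
      intro a
      by_cases h : ∃ A : s.toSet, (f A).1 = a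
      · simp only [g, dif_pos h]; exact hs h.choose.2
      · simp only [g, dif_neg h]; exact hκF
    have hg2 : ∀ A : s.toSet, g (f A).1 = A.1 := by
      intro A
      have h : ∃ A' : s.toSet, (f A').1 = (f A).1 := ⟨A, rfl⟩
      simp only [g, dif_pos h]
      rw [f.injective (Subtype.ext h.choose_spec)]
    have hD : diagZ κ (zcode κ g) ∈ F := by
      refine hdia _ ⟨⟨ZFSet.powerset κ, isFunc_zcode fun b _ =>
        ZFSet.mem_powerset.2 (hsub _ (hg1 b))⟩, ?_⟩
      intro b v _ hv
      rw [(pair_mem_zcode.1 hv).2]; exact hg1 b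
    have h2 := hpair _ _ hD h
    refine absurd (h2.trans (mk_le_mk_of_subset (t := i.toSet) ?_)) (not_le.2 (hκ.2 i hi))
    rintro β ⟨hβD, hβB⟩
    obtain ⟨hβκ, hβ⟩ := ZFSet.mem_sep.1 hβD
    by_contra hβi
    have hiβ : i ⊆ β := ((hκ.1.mem hβκ).notMem_iff_subset (hκ.1.mem hi)).1 hβi
    refine (ZFSet.mem_sdiff.1 hβB).2 ((hB β).2 ⟨hβκ, fun A hA => ?_⟩)
    have := hβ (f ⟨A, hA⟩).1 A (hiβ (hfi ⟨A, hA⟩))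
      (pair_mem_zcode.2 ⟨(f ⟨A, hA⟩).2, (hg2 ⟨A, hA⟩).symm⟩)
    exact this
  · intro a ha
    rcases hult {a} (fun z hz => by rw [ZFSet.mem_singleton.1 hz]; exact ha) with h | h
    · exfalso
      have h1 := hbig _ h
      have h2 : zcard ({a} : ZFSet.{u}) ≤ 1 := by
        have h1 : ({a} : ZFSet.{u}) = insert a ∅ := by ext; simp
        rw [h1]
        refine (zcard_insert_le _ _).trans ?_
        rw [zcard_empty, zero_add]
      exact absurd (hunc.trans_le (h1.trans h2)) (not_lt.2 one_le_aleph0)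
    · exact ⟨_, h, by simp⟩

end

/-- **Observation 3.4** (Holy–Schlicht). For an uncountable cardinal `κ = κ^{<κ}` with
`2^κ = κ⁺`, the following are equivalent: the `κ⁺`-filter property, the strategic
`κ⁺`-filter property, and measurability of `κ`. -/
theorem filter_property_κplus_iff_measurable (κ γ : ZFSet.{u})
    (hκcard : IsCardZ κ) (hunc : Cardinal.aleph0 < zcard κ)
    (hlt : (zcard κ) ^< (zcard κ) = zcard κ)
    (hch : (2 : Cardinal.{u + 1}) ^ (zcard κ) = Order.succ (zcard κ))
    (hγ : IsCardZ γ) (hγsucc : zcard γ = Order.succ (zcard κ)) :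
    (FilterPropZ κ γ ↔ MeasurableZ κ) ∧ (StratFilterPropZ κ γ ↔ MeasurableZ κ) := by
  have h1 := filter_measurable κ γ hκcard hunc hlt hch hγ hγsucc
  have h2 := strat_filter κ γ hγ.1
  have hne : γ.toSet.Nonempty := by
    by_contra h
    rw [Set.not_nonempty_iff_eq_empty] at h
    have h0 : zcard γ = 0 := by rw [zcard, h]; exact Cardinal.mk_emptyCollection _
    rw [h0] at hγsucc
    exact absurd (hγsucc ▸ Order.lt_succ (zcard κ) : zcard κ < 0) (by simp)
  have h3 := measurable_strat κ γ hκcard hunc hne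
  exact ⟨⟨h1, fun h => h2 (h3 h)⟩, ⟨fun h => h1 (h2 h), h3⟩⟩
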